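/- arXiv:1205.4166 — 11 statements merged into one kernel-verified Lean document; each statement's English description precedes it below -/
import Mathlib

section
/- Let M be a matrix in SL(3,ℤ) whose characteristic polynomial is irreducible over ℚ. Then M is integer conjugate to at least one ς-reduced matrix; that is, there exists a perfect Hessenberg matrix M' integer conjugate to M such that ς(M') ≤ ς(M'') for every perfect Hessenberg matrix M'' integer conjugate to M. -/
/-- 3×3 integer matrices. -/
abbrev M3 : Type := Matrix (Fin 3) (Fin 3) ℤ

/-- Hessenberg complexity ς(M) = a21² · a32. -/
def HessComplexity (M : M3) : ℤ := (M 1 0) ^ 2 * (M 2 1)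

/-- A perfect (upper) Hessenberg matrix: a31 = 0, 0 ≤ a11 < a21, 0 ≤ a12 < a32,
0 ≤ a22 < a32. -/
def IsPerfectHessenberg (M : M3) : Prop :=
  M 2 0 = 0 ∧
  0 ≤ M 0 0 ∧ M 0 0 < M 1 0 ∧
  0 ≤ M 0 1 ∧ M 0 1 < M 2 1 ∧
  0 ≤ M 1 1 ∧ M 1 1 < M 2 1

/-- M₂ = X · M₁ · X⁻¹ for some X ∈ GL(3,ℤ). -/
def IntegerConjugate (M₁ M₂ : M3) : Prop :=
  ∃ X : M3, (X.det = 1 ∨ X.det = -1) ∧ M₂ = X * M₁ * X⁻¹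

open Matrix

namespace IntegerConjugate

theorem of_mul_eq_one {M X Y : M3} (h : X * Y = 1) : IntegerConjugate M (X * M * Y) := by
  refine ⟨X, Int.isUnit_iff.mp (isUnit_det_of_right_inverse h), ?_⟩
  rw [inv_eq_right_inv h]

theorem exists_mul_eq_one {M N : M3} (h : IntegerConjugate M N) :
    ∃ X Y : M3, X * Y = 1 ∧ N = X * M * Y := by
  obtain ⟨X, hX, rfl⟩ := h
  exact ⟨X, X⁻¹, mul_nonsing_inv X (Int.isUnit_iff.mpr hX), rfl⟩

theorem trans {L M N : M3} (h₁ : IntegerConjugate L M) (h₂ : IntegerConjugate M N) :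
    IntegerConjugate L N := by
  obtain ⟨X, Y, hXY, rfl⟩ := h₁.exists_mul_eq_one
  obtain ⟨Z, W, hZW, rfl⟩ := h₂.exists_mul_eq_one
  have h : Z * X * (Y * W) = 1 := by
    rw [Matrix.mul_assoc, ← Matrix.mul_assoc X, hXY, Matrix.one_mul, hZW]
  simpa only [Matrix.mul_assoc] using of_mul_eq_one (M := L) h

theorem charpoly_eq {M N : M3} (h : IntegerConjugate M N) : N.charpoly = M.charpoly := by
  obtain ⟨X, Y, hXY, rfl⟩ := h.exists_mul_eq_one
  rw [Matrix.mul_assoc, Matrix.charpoly_mul_comm, Matrix.mul_assoc, mul_eq_one_comm.mp hXY,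
    Matrix.mul_one]

theorem det_eq {M N : M3} (h : IntegerConjugate M N) : N.det = M.det := by
  rw [det_eq_sign_charpoly_coeff, det_eq_sign_charpoly_coeff, h.charpoly_eq]

end IntegerConjugate

/-- A matrix whose characteristic polynomial is irreducible over `ℚ` has no integer eigenvalue. -/
theorem det_scalar_sub_ne_zero {M : M3}
    (hirr : Irreducible (M.charpoly.map (Int.castRingHom ℚ))) (c : ℤ) :
    (scalar (Fin 3) c - M).det ≠ 0 := by
  rw [← eval_charpoly]
  intro h
  have hdeg : (M.charpoly.map (Int.castRingHom ℚ)).natDegree ≠ 1 := by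
    rw [M.charpoly_monic.natDegree_map, charpoly_natDegree_eq_dim]
    simp
  refine hirr.not_isRoot_of_natDegree_ne_one hdeg (x := (c : ℚ)) ?_
  simp [h]

/-- The subspace spanned by the first basis vector is not invariant. -/
theorem first_column_ne_zero {M : M3}
    (hirr : Irreducible (M.charpoly.map (Int.castRingHom ℚ))) : ¬(M 1 0 = 0 ∧ M 2 0 = 0) := by
  rintro ⟨h₁, h₂⟩
  apply det_scalar_sub_ne_zero hirr (M 0 0)
  rw [scalar_apply]
  simp [det_fin_three, h₁, h₂]

/-- The subspace spanned by the first two basis vectors is not invariant. -/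
theorem last_row_ne_zero {M : M3}
    (hirr : Irreducible (M.charpoly.map (Int.castRingHom ℚ))) : ¬(M 2 0 = 0 ∧ M 2 1 = 0) := by
  rintro ⟨h₁, h₂⟩
  apply det_scalar_sub_ne_zero hirr (M 2 2)
  rw [scalar_apply]
  simp [det_fin_three, h₁, h₂]

theorem exists_conjugate_hessenberg (M : M3) (hM : ¬(M 1 0 = 0 ∧ M 2 0 = 0)) :
    ∃ N : M3, IntegerConjugate M N ∧ N 2 0 = 0 ∧ 0 < N 1 0 := by
  have hg : 0 < Int.gcd (M 1 0) (M 2 0) := by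
    rw [Int.gcd_pos_iff]
    tauto
  obtain ⟨a, b, hab, ha, hb⟩ := Int.exists_gcd_one hg
  obtain ⟨p, q, hpq⟩ := Int.isCoprime_iff_gcd_eq_one.mpr hab
  generalize Int.gcd (M 1 0) (M 2 0) = g at hg ha hb
  have hg' : (0 : ℤ) < g := by exact_mod_cast hg
  have hXY : (!![1, 0, 0; 0, p, q; 0, -b, a] : M3) * !![1, 0, 0; 0, a, -q; 0, b, p] = 1 := by
    ext i j
    fin_cases i <;> fin_cases j <;> simp [mul_apply, Fin.sum_univ_three] <;> linarith
  refine ⟨_, .of_mul_eq_one hXY, ?_, ?_⟩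
  · simp [mul_apply, vecMul, dotProduct, Fin.sum_univ_three]
    rw [ha, hb]
    ring
  · simp [mul_apply, vecMul, dotProduct, Fin.sum_univ_three]
    rw [ha, hb]
    linear_combination hg' - (g : ℤ) * hpq

theorem exists_conjugate_pos_subdiagonal (M : M3) (h₂₀ : M 2 0 = 0) (h₁₀ : 0 < M 1 0)
    (h₂₁ : M 2 1 ≠ 0) :
    ∃ N : M3, IntegerConjugate M N ∧ N 2 0 = 0 ∧ 0 < N 1 0 ∧ 0 < N 2 1 := by
  rcases h₂₁.lt_or_gt with h | h
  · have hXX : (!![1, 0, 0; 0, 1, 0; 0, 0, -1] : M3) * !![1, 0, 0; 0, 1, 0; 0, 0, -1] = 1 := by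
      decide
    refine ⟨_, .of_mul_eq_one hXX, ?_, ?_, ?_⟩ <;>
      simp [mul_apply, vecMul, dotProduct, Fin.sum_univ_three, h₂₀, h₁₀, h]
  · exact ⟨M, by simpa using IntegerConjugate.of_mul_eq_one (M := M) (one_mul (1 : M3)),
      h₂₀, h₁₀, h⟩

theorem exists_conjugate_isPerfectHessenberg (M : M3) (h₂₀ : M 2 0 = 0) (h₁₀ : 0 < M 1 0)
    (h₂₁ : 0 < M 2 1) : ∃ N : M3, IntegerConjugate M N ∧ IsPerfectHessenberg N := by
  have hred : ∀ x m : ℤ, 0 < m → ∃ k, 0 ≤ x + k * m ∧ x + k * m < m := fun x m hm =>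
    ⟨-(x / m), by linarith [Int.emod_nonneg x hm.ne', Int.mul_ediv_add_emod x m],
      by linarith [Int.emod_lt_of_pos x hm, Int.mul_ediv_add_emod x m]⟩
  obtain ⟨u, hu⟩ := hred (M 0 0) (M 1 0) h₁₀
  obtain ⟨w, hw⟩ := hred (M 1 1 - u * M 1 0) (M 2 1) h₂₁
  obtain ⟨v, hv⟩ := hred (M 0 1 + u * M 1 1 - u * (M 0 0 + u * M 1 0)) (M 2 1) h₂₁
  have hXY : (!![1, u, v; 0, 1, w; 0, 0, 1] : M3) *
      !![1, -u, u * w - v; 0, 1, -w; 0, 0, 1] = 1 := by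
    ext i j
    fin_cases i <;> fin_cases j <;> simp [mul_apply, Fin.sum_univ_three]
    ring
  refine ⟨_, .of_mul_eq_one hXY, ?_⟩
  simp [IsPerfectHessenberg, mul_apply, vecMul, dotProduct, Fin.sum_univ_three, h₂₀]
  refine ⟨?_, ?_, ?_, ?_, ?_, ?_⟩ <;> linarith

/-- Any SL(3,ℤ)-matrix with characteristic polynomial irreducible over ℚ is
integer conjugate to a ς-reduced perfect Hessenberg matrix. -/
theorem exists_sigma_reduced_representative (M : M3) (hdet : M.det = 1)
    (hirr : Irreducible (M.charpoly.map (Int.castRingHom ℚ))) :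
    ∃ M' : M3, M'.det = 1 ∧ IsPerfectHessenberg M' ∧ IntegerConjugate M M' ∧
      ∀ M'' : M3, M''.det = 1 → IsPerfectHessenberg M'' → IntegerConjugate M M'' →
        HessComplexity M' ≤ HessComplexity M'' := by
  obtain ⟨A, hMA, hA₂₀, hA₁₀⟩ := exists_conjugate_hessenberg M (first_column_ne_zero hirr)
  obtain ⟨B, hAB, hB₂₀, hB₁₀, hB₂₁⟩ := exists_conjugate_pos_subdiagonal A hA₂₀ hA₁₀
    fun h => last_row_ne_zero (by rwa [hMA.charpoly_eq]) ⟨hA₂₀, h⟩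
  obtain ⟨C, hBC, hC⟩ := exists_conjugate_isPerfectHessenberg B hB₂₀ hB₁₀ hB₂₁
  obtain ⟨M', ⟨hM', hMM'⟩, hmin⟩ := exists_minimalFor_of_wellFoundedLT
    (fun N : M3 => IsPerfectHessenberg N ∧ IntegerConjugate M N)
    (fun N => (HessComplexity N).toNat) ⟨C, hC, (hMA.trans hAB).trans hBC⟩
  refine ⟨M', hMM'.det_eq.trans hdet, hM', hMM', fun N _ hN hMN => ?_⟩
  have hnonneg : 0 ≤ HessComplexity N :=
    mul_nonneg (sq_nonneg _) (hN.2.2.2.1.trans hN.2.2.2.2.1.le)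
  have hle : (HessComplexity N).toNat ≤ (HessComplexity M').toNat →
    (HessComplexity M').toNat ≤ (HessComplexity N).toNat := hmin ⟨hN, hMN⟩
  omega
end

section
/- (Asymptotic ς-reducibility along rays of direction (−1,0).) Assume 0 ≤ a11 < a21, 0 ≤ a12 < a32, 0 ≤ a22 < a32, and fix integers m, n. Suppose that for every integer t ≥ 0 the matrix H(m−t, n) has characteristic polynomial irreducible over ℚ and has a non-real complex eigenvalue (i.e., the ray {H(m−t,n) : t ∈ ℤ, t ≥ 0} is an NRS-ray). Then there exists T such that for every integer t > T the matrix H(m−t, n) is ς-reduced. -/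
/-- A ς-reduced matrix: a perfect Hessenberg SL(3,ℤ)-matrix whose Hessenberg
complexity is minimal in its integer conjugacy class. -/
def SigmaReduced (M : M3) : Prop :=
  M.det = 1 ∧ IsPerfectHessenberg M ∧
  ∀ M' : M3, M'.det = 1 → IsPerfectHessenberg M' → IntegerConjugate M M' →
    HessComplexity M ≤ HessComplexity M'

/-- The family H(m,n) of matrices of Hessenberg type ⟨a11,a21|a12,a22,a32⟩. -/
def Hmat (a11 a12 a13 a21 a22 a23 a32 a33 m n : ℤ) : M3 :=
  !![a11, a12, a11 * m + a12 * n + a13;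
     a21, a22, a21 * m + a22 * n + a23;
     0,   a32, a32 * n + a33]

open Matrix

namespace HessenbergRay

theorem det_three {R : Type*} [CommRing R] (a b c d e f g h i : R) :
    det !![a, b, c; d, e, f; g, h, i] =
      a * e * i - a * f * h - b * d * i + b * f * g + c * d * h - c * e * g := by
  rw [det_fin_three]
  rfl

/-- The norm form `N(A + Bθ + Dθ²)` for a root `θ` of `X³ - τX² + σX - 1`, written as the
determinant of the coordinates of `ξ, θξ, θ²ξ`. -/
def normForm {R : Type*} [CommRing R] (τ σ A B D : R) : R :=
  det !![A, D, B + τ * D;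
         B, A - σ * D, D - σ * (B + τ * D);
         D, B + τ * D, A - σ * D + τ * (B + τ * D)]

theorem normForm_mul_root {R : Type*} [CommRing R] (τ σ A B D : R) :
    normForm τ σ D (A - σ * D) (B + τ * D) = normForm τ σ A B D := by
  simp only [normForm, det_three]
  ring

theorem normForm_eq_mul {τ σ A B D l r : ℝ} (hlr : l * r = 1)
    (hl : l ^ 3 - τ * l ^ 2 + σ * l - 1 = 0) :
    normForm τ σ A B D = (A + B * l + D * l ^ 2) *
      ((A - r * D) ^ 2 + (τ - l) * (A - r * D) * (B + (τ - l) * D)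
        + r * (B + (τ - l) * D) ^ 2) := by
  have hσ : σ = r - l ^ 2 + τ * l := by
    linear_combination r * hl - (l ^ 2 - τ * l + σ) * hlr
  have hl0 : l ≠ 0 := left_ne_zero_of_mul_eq_one hlr
  obtain rfl : r = l⁻¹ := eq_inv_of_mul_eq_one_right hlr
  subst hσ
  simp only [normForm, det_three]
  field_simp
  ring

theorem exists_small_root {τ σ : ℝ} (hσ : 4 + 4 * |τ| ≤ σ) :
    ∃ l : ℝ, 0 < l ∧ l * σ ≤ 2 ∧ l ^ 3 - τ * l ^ 2 + σ * l - 1 = 0 := by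
  have hτ := abs_nonneg τ
  have hσ0 : 0 < σ := by linarith
  set f : ℝ → ℝ := fun l => l ^ 3 - τ * l ^ 2 + σ * l - 1 with hf
  have hcont : ContinuousOn f (Set.Icc 0 (2 / σ)) := by
    apply Continuous.continuousOn
    fun_prop
  have hend : 0 ≤ f (2 / σ) := by
    have h1 : σ * (2 / σ) = 2 := by field_simp
    have h2 : 0 < 2 / σ := by positivity
    have h3 : (2 / σ) ≤ 1 / 2 := by
      rw [div_le_iff₀ hσ0]; linarith
    have h4 : τ * (2 / σ) ≤ 1 / 2 := by
      rw [← mul_div_assoc, div_le_iff₀ hσ0]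
      linarith [le_abs_self τ]
    simp only [hf]
    nlinarith [pow_pos h2 3, mul_le_mul_of_nonneg_right h4 h2.le]
  obtain ⟨l, hl, hfl⟩ := intermediate_value_Icc (by positivity : (0 : ℝ) ≤ 2 / σ) hcont
    (show (0 : ℝ) ∈ Set.Icc (f 0) (f (2 / σ)) from ⟨by simp [hf], hend⟩)
  refine ⟨l, lt_of_le_of_ne hl.1 ?_, ?_, hfl⟩
  · rintro rfl
    norm_num [hf] at hfl
  · have := hl.2
    rwa [le_div_iff₀ hσ0] at this

/-- A point on which the real form lies in the window `[K l, K)` and the norm is less than `K / 4`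
has vanishing last coordinate and small middle coordinate. -/
theorem coordinates_of_small_norm {τ A D B l r K : ℝ} (hl0 : 0 < l) (hlr : l * r = 1) (hK : 0 < K)
    (hr8 : 8 ≤ r) (hrτ : (|τ| + 1) ^ 2 ≤ r) (hrK : 2 * K + 6 ≤ r)
    (hD : D = 0 ∨ 1 ≤ |D|)
    (hlow : K * l ≤ |A + B * l + D * l ^ 2|) (hup : |A + B * l + D * l ^ 2| < K)
    (hN : |A + B * l + D * l ^ 2| *
      |(A - r * D) ^ 2 + (τ - l) * (A - r * D) * (B + (τ - l) * D)
        + r * (B + (τ - l) * D) ^ 2| < K / 4) :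
    D = 0 ∧ B ^ 2 < 1 := by
  have hl1 : l ≤ 1 := by nlinarith
  obtain ⟨b, hb⟩ : ∃ b, b = τ - l := ⟨_, rfl⟩
  obtain ⟨P, hP⟩ : ∃ P, P = A - r * D := ⟨_, rfl⟩
  obtain ⟨R, hR⟩ : ∃ R, R = B + b * D := ⟨_, rfl⟩
  have hbabs : |b| ≤ |τ| + 1 := by
    rw [hb]
    calc |τ - l| ≤ |τ| + |l| := abs_sub _ _
      _ ≤ |τ| + 1 := by rw [abs_of_pos hl0]; linarith
  have hb2 : b ^ 2 ≤ r := by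
    rw [← sq_abs]
    exact (pow_le_pow_left₀ (abs_nonneg b) hbabs 2).trans hrτ
  have hbl : |b| * l ≤ 1 := by
    have : |b| ≤ r := by nlinarith [abs_nonneg τ]
    nlinarith
  rw [← hb, ← hP, ← hR] at hN
  have hQ : P ^ 2 + b * P * R + r * R ^ 2 < r / 4 := by
    have h1 := le_abs_self (P ^ 2 + b * P * R + r * R ^ 2)
    have h2 := abs_nonneg (P ^ 2 + b * P * R + r * R ^ 2)
    have h3 := lt_of_le_of_lt (mul_le_mul_of_nonneg_right hlow h2) hN
    have h4 : l * |P ^ 2 + b * P * R + r * R ^ 2| < 1 / 4 := by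
      by_contra! h
      nlinarith
    have h5 : |P ^ 2 + b * P * R + r * R ^ 2| < r / 4 := by
      calc _ = r * (l * |P ^ 2 + b * P * R + r * R ^ 2|) := by
            linear_combination -|P ^ 2 + b * P * R + r * R ^ 2| * hlr
        _ < r * (1 / 4) := by gcongr
        _ = r / 4 := by ring
    linarith
  have hsum : P ^ 2 + r * R ^ 2 < r / 2 := by
    nlinarith [sq_nonneg (P + b * R), mul_le_mul_of_nonneg_right hb2 (sq_nonneg R)]
  have hP2 : P ^ 2 < r / 2 := by nlinarith [sq_nonneg R]
  have hR2 : R ^ 2 < 1 := by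
    by_contra! h
    nlinarith [sq_nonneg P]
  have hPabs : |P| ≤ r / 4 := abs_le_of_sq_le_sq (by nlinarith) (by linarith)
  have hRabs : |R| ≤ 1 := abs_le_of_sq_le_sq (by linarith) zero_le_one
  have hD0 : D = 0 := by
    refine hD.resolve_right fun h1 => ?_
    have hrD : r * D = (A + B * l + D * l ^ 2) - P - l * R + b * l * D - l ^ 2 * D := by
      rw [hP, hR]; ring
    have e1 : |l * R| ≤ 1 := by
      rw [abs_mul, abs_of_pos hl0]; nlinarith [abs_nonneg R]
    have e2 : |b * l * D| ≤ |D| := by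
      rw [abs_mul, abs_mul, abs_of_pos hl0]; nlinarith [abs_nonneg D]
    have e3 : |l ^ 2 * D| ≤ |D| := by
      rw [abs_mul, abs_of_pos (pow_pos hl0 2)]
      nlinarith [abs_nonneg D, pow_le_one₀ hl0.le hl1 (n := 2)]
    have e4 : r * |D| ≤ K + r / 4 + 1 + |D| + |D| := by
      calc r * |D| = |r * D| := by rw [abs_mul, abs_of_pos (by linarith : 0 < r)]
        _ ≤ K + r / 4 + 1 + |D| + |D| := by
          rw [hrD, abs_le]
          rw [abs_le] at e1 e2 e3 hPabs
          rw [abs_lt] at hup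
          constructor <;> linarith [hup.1, hup.2, e1.1, e1.2, e2.1, e2.2, e3.1, e3.2,
            hPabs.1, hPabs.2]
    have e5 : 0 ≤ (r - 2) * (|D| - 1) := mul_nonneg (by linarith) (by linarith)
    linarith
  refine ⟨hD0, ?_⟩
  rw [hD0, mul_zero, add_zero] at hR
  rwa [← hR]

section Ray

variable {a11 a12 a13 a21 a22 a23 a32 a33 : ℤ}

/-- Coordinates in which a Hessenberg matrix with first two columns `(a11, a21, 0)` and
`(a12, a22, a32)` acts as a companion matrix. -/
def coordA (a11 a12 a21 a22 a32 x y z : ℤ) : ℤ :=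
  a21 * a32 * x - a11 * a32 * y + (a11 * a22 - a12 * a21) * z

/-- The second companion coordinate. -/
def coordB (a11 a22 a32 y z : ℤ) : ℤ := a32 * y - (a11 + a22) * z

/-- The middle coefficient of the characteristic polynomial of
`[[a11, a12, a13], [a21, a22, a23], [0, a32, a33]]`. -/
def minorSum (a11 a12 a21 a22 a23 a32 a33 : ℤ) : ℤ :=
  a11 * a22 - a12 * a21 + a11 * a33 + a22 * a33 - a23 * a32

/-- The Krylov matrix with columns `v, M v, M² v`. -/
def krylov (M : M3) (v : Fin 3 → ℤ) : M3 :=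
  (Matrix.of ![v, M *ᵥ v, M *ᵥ (M *ᵥ v)])ᵀ

theorem mul_krylov {M M' Y : M3} (h : M * Y = Y * M') (v : Fin 3 → ℤ) :
    krylov M (Y *ᵥ v) = Y * krylov M' v := by
  have h1 : ∀ w, M *ᵥ (Y *ᵥ w) = Y *ᵥ (M' *ᵥ w) := fun w => by
    rw [mulVec_mulVec, h, mulVec_mulVec]
  ext i j
  fin_cases j
  · rfl
  · exact congrFun (h1 v) i
  · change (M *ᵥ (M *ᵥ (Y *ᵥ v))) i = (Y *ᵥ (M' *ᵥ (M' *ᵥ v))) i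
    rw [h1, h1]

theorem det_krylov_of_hessenberg {M : M3} (h : M 2 0 = 0) :
    (krylov M ![1, 0, 0]).det = HessComplexity M := by
  simp [krylov, det_fin_three, HessComplexity, Matrix.mul_apply, mulVec, dotProduct,
    Fin.sum_univ_three, h]
  ring

theorem normForm_coord_eq_det_krylov
    (hdet : (!![a11, a12, a13; a21, a22, a23; 0, a32, a33] : M3).det = 1) (v : Fin 3 → ℤ) :
    normForm (a11 + a22 + a33) (minorSum a11 a12 a21 a22 a23 a32 a33)
      (coordA a11 a12 a21 a22 a32 (v 0) (v 1) (v 2)) (coordB a11 a22 a32 (v 1) (v 2)) (v 2) =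
    a21 * a32 ^ 2 * (krylov !![a11, a12, a13; a21, a22, a23; 0, a32, a33] v).det := by
  set W : M3 := !![a21 * a32, -(a11 * a32), a11 * a22 - a12 * a21;
    0, a32, -(a11 + a22); 0, 0, 1] with hW
  set C : M3 := !![0, 0, 1; 1, 0, -minorSum a11 a12 a21 a22 a23 a32 a33;
    0, 1, a11 + a22 + a33] with hC
  rw [det_three] at hdet
  have hWC : C * W = W * !![a11, a12, a13; a21, a22, a23; 0, a32, a33] := by
    ext i j
    fin_cases i <;> fin_cases j <;>
      simp [hW, hC, minorSum, Matrix.mul_apply, Fin.sum_univ_three] <;>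
      first | ring1 | linear_combination -hdet
  have hWdet : W.det = a21 * a32 ^ 2 := by
    rw [hW, det_three]; ring
  rw [← hWdet, ← det_mul, ← mul_krylov hWC, normForm]
  congr 1
  ext i j
  fin_cases i <;> fin_cases j <;>
    simp [krylov, hW, hC, coordA, coordB, dotProduct, Fin.sum_univ_three] <;> ring

theorem exists_orbit_point
    (hdet : (!![a11, a12, a13; a21, a22, a23; 0, a32, a33] : M3).det = 1) {l : ℝ} (hl0 : 0 < l)
    (hl : l ^ 3 - ((a11 + a22 + a33 : ℤ) : ℝ) * l ^ 2
      + (minorSum a11 a12 a21 a22 a23 a32 a33 : ℝ) * l - 1 = 0) (x y z k : ℤ) :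
    ∃ x' y' z' : ℤ,
      normForm (a11 + a22 + a33) (minorSum a11 a12 a21 a22 a23 a32 a33)
        (coordA a11 a12 a21 a22 a32 x' y' z') (coordB a11 a22 a32 y' z') z' =
      normForm (a11 + a22 + a33) (minorSum a11 a12 a21 a22 a23 a32 a33)
        (coordA a11 a12 a21 a22 a32 x y z) (coordB a11 a22 a32 y z) z ∧
      (coordA a11 a12 a21 a22 a32 x' y' z' : ℝ) + coordB a11 a22 a32 y' z' * l + z' * l ^ 2 =
      l ^ k * ((coordA a11 a12 a21 a22 a32 x y z : ℝ) + coordB a11 a22 a32 y z * l + z * l ^ 2) := by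
  rw [det_three] at hdet
  have hfwd : ∀ x y z : ℤ,
      coordA a11 a12 a21 a22 a32 (a11 * x + a12 * y + a13 * z) (a21 * x + a22 * y + a23 * z)
        (a32 * y + a33 * z) = z ∧
      coordB a11 a22 a32 (a21 * x + a22 * y + a23 * z) (a32 * y + a33 * z) =
        coordA a11 a12 a21 a22 a32 x y z - minorSum a11 a12 a21 a22 a23 a32 a33 * z ∧
      a32 * y + a33 * z = coordB a11 a22 a32 y z + (a11 + a22 + a33) * z := by
    intro x y z
    simp only [coordA, coordB, minorSum]
    refine ⟨by linear_combination z * hdet, by ring, by ring⟩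
  have hN : ∀ x y z : ℤ,
      normForm (a11 + a22 + a33) (minorSum a11 a12 a21 a22 a23 a32 a33)
        (coordA a11 a12 a21 a22 a32 (a11 * x + a12 * y + a13 * z) (a21 * x + a22 * y + a23 * z)
          (a32 * y + a33 * z))
        (coordB a11 a22 a32 (a21 * x + a22 * y + a23 * z) (a32 * y + a33 * z))
        (a32 * y + a33 * z) =
      normForm (a11 + a22 + a33) (minorSum a11 a12 a21 a22 a23 a32 a33)
        (coordA a11 a12 a21 a22 a32 x y z) (coordB a11 a22 a32 y z) z := by
    intro x y z
    obtain ⟨h1, h2, h3⟩ := hfwd x y z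
    rw [h1, h2, h3, normForm_mul_root]
  have hL : ∀ x y z : ℤ,
      (coordA a11 a12 a21 a22 a32 (a11 * x + a12 * y + a13 * z) (a21 * x + a22 * y + a23 * z)
          (a32 * y + a33 * z) : ℝ)
        + coordB a11 a22 a32 (a21 * x + a22 * y + a23 * z) (a32 * y + a33 * z) * l
        + ((a32 * y + a33 * z : ℤ) : ℝ) * l ^ 2 =
      l * ((coordA a11 a12 a21 a22 a32 x y z : ℝ) + coordB a11 a22 a32 y z * l + z * l ^ 2) := by
    intro x y z
    obtain ⟨h1, h2, h3⟩ := hfwd x y z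
    rw [h1, h2, h3]
    push_cast at hl ⊢
    linear_combination -(z : ℝ) * hl
  have hinv : ∀ x y z : ℤ, ∃ x' y' z' : ℤ, a11 * x' + a12 * y' + a13 * z' = x ∧
      a21 * x' + a22 * y' + a23 * z' = y ∧ a32 * y' + a33 * z' = z := by
    intro x y z
    refine ⟨(a22 * a33 - a23 * a32) * x - (a12 * a33 - a13 * a32) * y
        + (a12 * a23 - a13 * a22) * z,
      -(a21 * a33) * x + a11 * a33 * y - (a11 * a23 - a13 * a21) * z,
      a21 * a32 * x - a11 * a32 * y + (a11 * a22 - a12 * a21) * z, ?_, ?_, ?_⟩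
    · linear_combination x * hdet
    · linear_combination y * hdet
    · linear_combination z * hdet
  induction k using Int.induction_on with
  | zero => exact ⟨x, y, z, rfl, by simp⟩
  | succ k ih =>
    obtain ⟨x', y', z', h1, h2⟩ := ih
    refine ⟨_, _, _, (hN x' y' z').trans h1, (hL x' y' z').trans ?_⟩
    rw [h2, zpow_add_one₀ hl0.ne']
    ring
  | pred k ih =>
    obtain ⟨x', y', z', h1, h2⟩ := ih
    obtain ⟨x₁, y₁, z₁, rfl, rfl, rfl⟩ := hinv x' y' z'
    refine ⟨x₁, y₁, z₁, (hN _ _ _).symm.trans h1, ?_⟩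
    rw [hL] at h2
    rw [zpow_sub_one₀ hl0.ne']
    field_simp
    linear_combination h2

/-- Off the zero set of the norm form, its values at lattice points are at least the value at
the first basis vector, as soon as the middle coefficient of the characteristic polynomial is
large. -/
theorem cube_le_abs_normForm (h21 : 0 < a21) (h32 : 0 < a32)
    (hdet : (!![a11, a12, a13; a21, a22, a23; 0, a32, a33] : M3).det = 1)
    (hσ : 16 * (a21 * a32) ^ 3 + 2 * (|a11 + a22 + a33| + 1) ^ 2 + 12 + 4 * |a11 + a22 + a33| ≤
      minorSum a11 a12 a21 a22 a23 a32 a33) (x y z : ℤ)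
    (hne : normForm (a11 + a22 + a33) (minorSum a11 a12 a21 a22 a23 a32 a33)
        (coordA a11 a12 a21 a22 a32 x y z) (coordB a11 a22 a32 y z) z ≠ 0) :
    (a21 * a32) ^ 3 ≤ |normForm (a11 + a22 + a33) (minorSum a11 a12 a21 a22 a23 a32 a33)
        (coordA a11 a12 a21 a22 a32 x y z) (coordB a11 a22 a32 y z) z| := by
  by_contra! hlt
  obtain ⟨τ, hτ⟩ : ∃ τ, τ = a11 + a22 + a33 := ⟨_, rfl⟩
  obtain ⟨σ, hσdef⟩ : ∃ σ, σ = minorSum a11 a12 a21 a22 a23 a32 a33 := ⟨_, rfl⟩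
  have hs : 1 ≤ (a21 * a32) ^ 3 := Int.add_one_le_iff.mpr (pow_pos (mul_pos h21 h32) 3)
  have hsR : (1 : ℝ) ≤ ((a21 : ℝ) * a32) ^ 3 := by exact_mod_cast hs
  have hσR : 16 * ((a21 : ℝ) * a32) ^ 3 + 2 * (|(τ : ℝ)| + 1) ^ 2 + 12 + 4 * |(τ : ℝ)| ≤ (σ : ℝ) := by
    rw [hτ, hσdef]; exact_mod_cast hσ
  have hτ0 := abs_nonneg (τ : ℝ)
  obtain ⟨l, hl0, hl2, hl⟩ := exists_small_root (τ := (τ : ℝ)) (σ := (σ : ℝ)) (by nlinarith)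
  have hlr : l * l⁻¹ = 1 := mul_inv_cancel₀ hl0.ne'
  obtain ⟨r, hr⟩ : ∃ r, r = l⁻¹ := ⟨_, rfl⟩
  rw [← hr] at hlr
  have hrσ : (σ : ℝ) ≤ 2 * r := by
    by_contra! h
    nlinarith
  have hcast : ∀ A B D : ℤ, ((normForm τ σ A B D : ℤ) : ℝ) = normForm (τ : ℝ) σ A B D := by
    intro A B D
    simp only [normForm, det_three]
    push_cast
    ring
  set L : ℝ := (coordA a11 a12 a21 a22 a32 x y z : ℝ) + coordB a11 a22 a32 y z * l + z * l ^ 2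
    with hLdef
  rw [← hτ, ← hσdef] at hne hlt
  have hL0 : L ≠ 0 := by
    intro h
    apply hne
    have h1 := hcast (coordA a11 a12 a21 a22 a32 x y z) (coordB a11 a22 a32 y z) z
    rw [normForm_eq_mul hlr hl, ← hLdef, h, zero_mul] at h1
    exact_mod_cast h1
  set K : ℝ := 4 * ((a21 : ℝ) * a32) ^ 3 with hK
  have hK0 : 0 < K := by linarith
  have hr1 : 1 < r := by nlinarith
  obtain ⟨k, hk1, hk2⟩ := exists_mem_Ico_zpow (x := |L| / (K * l)) (y := r)
    (div_pos (abs_pos.mpr hL0) (mul_pos hK0 hl0)) hr1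
  obtain ⟨x', y', z', hN', hL'⟩ := exists_orbit_point hdet hl0
    (by rw [← hτ, ← hσdef]; exact hl) x y z k
  rw [← hτ, ← hσdef] at hN'
  rw [← hLdef] at hL'
  have hlk : l ^ k * r ^ k = 1 := by rw [← mul_zpow, hlr, _root_.one_zpow]
  have hlk0 : 0 < l ^ k := zpow_pos hl0 k
  rw [le_div_iff₀ (mul_pos hK0 hl0)] at hk1
  rw [div_lt_iff₀ (mul_pos hK0 hl0), zpow_add_one₀ (by linarith)] at hk2
  have hNR : |((normForm τ σ (coordA a11 a12 a21 a22 a32 x' y' z')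
      (coordB a11 a22 a32 y' z') z' : ℤ) : ℝ)| < K / 4 := by
    rw [hN', hK]
    have : |((normForm τ σ (coordA a11 a12 a21 a22 a32 x y z)
      (coordB a11 a22 a32 y z) z : ℤ) : ℝ)| < ((a21 : ℝ) * a32) ^ 3 := by exact_mod_cast hlt
    linarith
  have hcoord := coordinates_of_small_norm (τ := τ)
    (A := coordA a11 a12 a21 a22 a32 x' y' z') (B := coordB a11 a22 a32 y' z') (D := z')
    hl0 hlr hK0 (by nlinarith) (by nlinarith) (by nlinarith)
    (by
      rcases eq_or_ne z' 0 with h | h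
      · left; exact_mod_cast h
      · right; exact_mod_cast Int.one_le_abs h)
    (by
      rw [hL', abs_mul, abs_of_pos hlk0]
      calc K * l = l ^ k * (r ^ k * (K * l)) := by linear_combination -(K * l) * hlk
        _ ≤ l ^ k * |L| := by gcongr)
    (by
      rw [hL', abs_mul, abs_of_pos hlk0]
      calc l ^ k * |L| < l ^ k * (r ^ k * r * (K * l)) := by gcongr
        _ = K := by linear_combination K * r * l * hlk + K * hlr)
    (by rwa [← abs_mul, ← normForm_eq_mul hlr hl, ← hcast])
  obtain ⟨hz, hB⟩ := hcoord
  have hz0 : z' = 0 := by exact_mod_cast hz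
  subst hz0
  have hB' : (coordB a11 a22 a32 y' 0) ^ 2 < 1 := by exact_mod_cast hB
  have hy0 : y' = 0 := by
    by_contra h
    have h1 : 0 < (coordB a11 a22 a32 y' 0) ^ 2 := by
      simp only [coordB]
      have : a32 * y' ≠ 0 := mul_ne_zero h32.ne' h
      rw [mul_zero, sub_zero]
      positivity
    omega
  subst hy0
  rw [← hN'] at hne hlt
  have hval : normForm τ σ (coordA a11 a12 a21 a22 a32 x' 0 0) (coordB a11 a22 a32 0 0) 0 =
      (a21 * a32) ^ 3 * x' ^ 3 := by
    simp only [normForm, coordA, coordB, det_three]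
    ring
  rw [hval] at hne hlt
  have hx1 := Int.one_le_abs (right_ne_zero_of_mul hne)
  rw [abs_mul, abs_of_pos (by linarith : 0 < (a21 * a32) ^ 3)] at hlt
  nlinarith

theorem sigmaReduced_of_le_minorSum (h11 : 0 ≤ a11) (h1121 : a11 < a21)
    (h12 : 0 ≤ a12) (h1232 : a12 < a32) (h22 : 0 ≤ a22) (h2232 : a22 < a32)
    (hdet : (!![a11, a12, a13; a21, a22, a23; 0, a32, a33] : M3).det = 1)
    (hσ : 16 * (a21 * a32) ^ 3 + 2 * (|a11 + a22 + a33| + 1) ^ 2 + 12 + 4 * |a11 + a22 + a33| ≤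
      minorSum a11 a12 a21 a22 a23 a32 a33) :
    SigmaReduced !![a11, a12, a13; a21, a22, a23; 0, a32, a33] := by
  have h21 : 0 < a21 := by omega
  have h32 : 0 < a32 := by omega
  refine ⟨hdet, ⟨rfl, h11, h1121, h12, h1232, h22, h2232⟩, ?_⟩
  rintro M' - ⟨hM20, hM00, hM0010, hM01, hM0121, -, -⟩ ⟨X, hX, hM'⟩
  have hunit : IsUnit X.det := Int.isUnit_iff.mpr hX
  have hYM : !![a11, a12, a13; a21, a22, a23; 0, a32, a33] * X⁻¹ = X⁻¹ * M' := by
    rw [hM', ← Matrix.mul_assoc, ← Matrix.mul_assoc, nonsing_inv_mul _ hunit, Matrix.one_mul]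
  have hY : |X⁻¹.det| = 1 := by
    rw [← Int.isUnit_iff_abs_eq]
    exact isUnit_nonsing_inv_det _ hunit
  have hςpos : 0 < HessComplexity M' :=
    mul_pos (pow_pos (by omega) 2) (by omega)
  have hN := normForm_coord_eq_det_krylov hdet (X⁻¹ *ᵥ ![1, 0, 0])
  rw [mul_krylov hYM, det_mul, det_krylov_of_hessenberg hM20] at hN
  have hNabs := congrArg abs hN
  rw [abs_mul, abs_mul X⁻¹.det, hY, one_mul, abs_of_pos hςpos,
    abs_of_pos (by positivity : 0 < a21 * a32 ^ 2)] at hNabs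
  have hpos : 0 < a21 * a32 ^ 2 := by positivity
  have hle := cube_le_abs_normForm h21 h32 hdet hσ _ _ _
    (abs_pos.mp (hNabs ▸ mul_pos hpos hςpos))
  rw [hNabs] at hle
  refine le_of_mul_le_mul_left (le_trans (le_of_eq ?_) hle) hpos
  simp only [HessComplexity, of_apply, cons_val]
  ring

end Ray

end HessenbergRay

/-- Along any NRS-ray of direction (−1,0), all but finitely many matrices are
ς-reduced. -/
theorem asymptotic_sigma_reducibility_dir_neg_one_zero
    (a11 a12 a13 a21 a22 a23 a32 a33 m n : ℤ)
    (hdet : (Hmat a11 a12 a13 a21 a22 a23 a32 a33 0 0).det = 1)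
    (h11 : 0 ≤ a11) (h1121 : a11 < a21)
    (h12 : 0 ≤ a12) (h1232 : a12 < a32)
    (h22 : 0 ≤ a22) (h2232 : a22 < a32)
    (hray : ∀ t : ℤ, 0 ≤ t →
      Irreducible
        ((Hmat a11 a12 a13 a21 a22 a23 a32 a33 (m - t) n).charpoly.map
          (Int.castRingHom ℚ)) ∧
      ∃ z : ℂ, z.im ≠ 0 ∧
        Polynomial.aeval z (Hmat a11 a12 a13 a21 a22 a23 a32 a33 (m - t) n).charpoly = 0) :
    ∃ T : ℤ, ∀ t : ℤ, T < t →
      SigmaReduced (Hmat a11 a12 a13 a21 a22 a23 a32 a33 (m - t) n) := by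
  have hdet' : ∀ t : ℤ, (Hmat a11 a12 a13 a21 a22 a23 a32 a33 (m - t) n).det = 1 := by
    intro t
    rw [← hdet]
    simp only [Hmat, HessenbergRay.det_three]
    ring
  obtain ⟨c, hc⟩ : ∃ c, c = HessenbergRay.minorSum a11 a12 a21 a22 (a21 * m + a22 * n + a23) a32
    (a32 * n + a33) := ⟨_, rfl⟩
  obtain ⟨S, hS⟩ : ∃ S, S = 16 * (a21 * a32) ^ 3 + 2 * (|a11 + a22 + (a32 * n + a33)| + 1) ^ 2 + 12
    + 4 * |a11 + a22 + (a32 * n + a33)| := ⟨_, rfl⟩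
  refine ⟨|S - c|, fun t ht => ?_⟩
  refine HessenbergRay.sigmaReduced_of_le_minorSum h11 h1121 h12 h1232 h22 h2232 (hdet' t) ?_
  rw [← hS]
  have hσ : HessenbergRay.minorSum a11 a12 a21 a22 (a21 * (m - t) + a22 * n + a23) a32
      (a32 * n + a33) = c + a21 * a32 * t := by
    rw [hc]
    simp only [HessenbergRay.minorSum]
    ring
  rw [hσ]
  have hs : 1 ≤ a21 * a32 := Int.add_one_le_iff.mpr (mul_pos (by omega) (by omega))
  nlinarith [le_abs_self (S - c), abs_nonneg (S - c)]
end

section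
/- (Asymptotic ς-reducibility along rays of direction (a11,a21).) Assume 0 ≤ a11 < a21, 0 ≤ a12 < a32, 0 ≤ a22 < a32, and fix integers m, n. Suppose that for every integer t ≥ 0 the matrix H(m+a11·t, n+a21·t) has characteristic polynomial irreducible over ℚ and has a non-real complex eigenvalue (i.e., the ray {H(m+a11·t, n+a21·t) : t ∈ ℤ, t ≥ 0} is an NRS-ray). Then there exists T such that for every integer t > T the matrix H(m+a11·t, n+a21·t) is ς-reduced. -/
/-- The matrix with columns `v`, `M v`, `M² v`. -/
def krylov {R : Type*} [CommRing R] (M : Matrix (Fin 3) (Fin 3) R) (v : Fin 3 → R) :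
    Matrix (Fin 3) (Fin 3) R :=
  (Matrix.of ![v, M.mulVec v, M.mulVec (M.mulVec v)]).transpose

theorem mul_krylov {R : Type*} [CommRing R] {X M M' : Matrix (Fin 3) (Fin 3) R}
    (h : X * M = M' * X) (v : Fin 3 → R) :
    X * krylov M v = krylov M' (X.mulVec v) := by
  have h1 : M'.mulVec (X.mulVec v) = X.mulVec (M.mulVec v) := by
    rw [Matrix.mulVec_mulVec, Matrix.mulVec_mulVec, h]
  have h2 : M'.mulVec (M'.mulVec (X.mulVec v)) = X.mulVec (M.mulVec (M.mulVec v)) := by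
    rw [h1, Matrix.mulVec_mulVec, ← h, ← Matrix.mulVec_mulVec]
  ext i j
  rw [krylov, krylov, h2, h1]
  fin_cases j <;> rfl

theorem det_krylov_intCast (M : M3) (v : Fin 3 → ℤ) :
    (krylov (M.map (Int.cast : ℤ → ℝ)) (fun i => (v i : ℝ))).det = ((krylov M v).det : ℝ) := by
  simp [krylov, Matrix.det_fin_three, Matrix.mulVec, dotProduct, Fin.sum_univ_three,
    Matrix.mul_apply]

theorem det_krylov_mulVec_self {M : M3} (hM : M.det = 1) (v : Fin 3 → ℤ) :
    (krylov M (M.mulVec v)).det = (krylov M v).det := by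
  rw [← mul_krylov rfl, Matrix.det_mul, hM, one_mul]

theorem det_krylov_single_zero {M : M3} (h : M 2 0 = 0) :
    (krylov M ![1, 0, 0]).det = HessComplexity M := by
  simp [krylov, Matrix.det_fin_three, Matrix.mulVec, dotProduct, Fin.sum_univ_three, h,
    HessComplexity, Matrix.mul_apply]
  ring

/-- The companion matrix of `x³ - R x² - q x - 1`. -/
def cubicCompanion (q R : ℝ) : Matrix (Fin 3) (Fin 3) ℝ :=
  !![0, 0, 1; 1, 0, q; 0, 1, R]

/-- The squared modulus of `g 0 + g 1 μ + g 2 μ²`, where `μ` is a root of `x² - τ x + ν`. -/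
def quadNorm (ν τ : ℝ) (g : Fin 3 → ℝ) : ℝ :=
  (g 0 - g 2 * ν) ^ 2 + (g 0 - g 2 * ν) * (g 1 + g 2 * τ) * τ + (g 1 + g 2 * τ) ^ 2 * ν

/-- The value at `x` of the quadratic polynomial with coefficients `g`. -/
def quadEval (x : ℝ) (g : Fin 3 → ℝ) : ℝ := g 0 + g 1 * x + g 2 * x ^ 2

theorem det_krylov_cubicCompanion {q R x ν τ : ℝ} (hν : x * ν = 1) (hτ : τ = -q * ν - ν ^ 2)
    (hR : R = x + τ) (g : Fin 3 → ℝ) :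
    (krylov (cubicCompanion q R) g).det = quadEval x g * quadNorm ν τ g := by
  have hx : x ≠ 0 := left_ne_zero_of_mul_eq_one hν
  have hν' : ν = 1 / x := by field_simp; linarith
  subst hR hτ hν'
  simp [krylov, Matrix.det_fin_three, dotProduct, Fin.sum_univ_three,
    cubicCompanion, quadEval, quadNorm]
  field_simp
  ring

theorem quadEval_cubicCompanion {q R x : ℝ} (hx : x ^ 3 = R * x ^ 2 + q * x + 1)
    (g : Fin 3 → ℝ) :
    quadEval x ((cubicCompanion q R).mulVec g) = x * quadEval x g := by
  simp [Matrix.mulVec, dotProduct, Fin.sum_univ_three, cubicCompanion, quadEval]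
  linear_combination -(g 2) * hx

theorem exists_root_ge (q L : ℝ) :
    ∃ R₀ : ℝ, ∀ R ≥ R₀, ∃ x ≥ L, x ^ 3 = R * x ^ 2 + q * x + 1 := by
  refine ⟨2 * |L| + 4 * |q| + 8, fun R hR => ?_⟩
  have hL := abs_nonneg L
  have hL' := le_abs_self L
  have hq := abs_nonneg q
  have hq1 := le_abs_self q
  have hq2 := neg_abs_le q
  have hRq : |q| * R ≤ R ^ 2 / 4 := by nlinarith
  have hR3 : R ^ 2 * 8 ≤ R ^ 3 := by nlinarith [sq_nonneg R]
  have hR2 : 64 ≤ R ^ 2 := by nlinarith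
  have hqR1 : q * R ≤ |q| * R := by nlinarith
  have hqR2 : -(|q| * R) ≤ q * R := by nlinarith
  have hcont : ContinuousOn (fun x : ℝ => x ^ 3 - (R * x ^ 2 + q * x + 1))
      (Set.Icc (R / 2) (2 * R)) := by fun_prop
  obtain ⟨x, hx, hx0⟩ := intermediate_value_Icc (by linarith) hcont
    (show (0 : ℝ) ∈ Set.Icc _ _ from ⟨by nlinarith, by nlinarith⟩)
  exact ⟨x, by linarith [hx.1], by linarith⟩

set_option maxHeartbeats 1000000 in
theorem exists_small_coeffs (q D : ℝ) (hD : 0 < D) :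
    ∃ L : ℝ, 2 ≤ L ∧ ∀ x ≥ L, ∀ ν τ : ℝ, x * ν = 1 → τ = -q * ν - ν ^ 2 → ∀ g : Fin 3 → ℝ,
      x ≤ 4 * D * |quadEval x g| → 4 * D * |quadEval x g| < x ^ 2 →
      |quadEval x g| * quadNorm ν τ g < 1 → D * |g 2| < 1 ∧ D * |g 0| < 1 := by
  have hq := abs_nonneg q
  have hD2 : 0 < D * (6 * D + 1) := by positivity
  have hD3 : 0 < D ^ 3 := by positivity
  refine ⟨2 + (|q| + 1) ^ 2 + 32 * (D * (6 * D + 1)) + 24 * D ^ 3, by nlinarith, ?_⟩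
  intro x hx ν τ hν hτ g h1 h2 h3
  have hx2 : 2 ≤ x := by nlinarith
  have hν0 : 0 < ν := by
    by_contra! h
    nlinarith
  have hν1 : ν ≤ 1 / 2 := by nlinarith
  -- `τ` is negligible compared with `√ν`
  have hτν : τ ^ 2 ≤ ν := by
    have ha : |τ| ≤ (|q| + 1) * ν := by
      rw [hτ, abs_le]
      constructor <;> nlinarith [le_abs_self q, neg_abs_le q]
    have hb : (|q| + 1) ^ 2 * ν ≤ 1 := by nlinarith
    calc τ ^ 2 = |τ| ^ 2 := (sq_abs τ).symm
      _ ≤ ((|q| + 1) * ν) ^ 2 := by gcongr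
      _ = ((|q| + 1) ^ 2 * ν) * ν := by ring
      _ ≤ 1 * ν := by gcongr
      _ = ν := one_mul ν
  have hℓ : quadEval x g = (g 0 - g 2 * ν) + (g 1 + g 2 * τ) * x
      + g 2 * (x ^ 2 + q + 2 * ν) := by
    rw [quadEval, hτ]
    linear_combination (g 2 * (q + ν)) * hν
  have hα : g 0 = (g 0 - g 2 * ν) + g 2 * ν := by ring
  rw [quadNorm] at h3
  generalize quadEval x g = ℓ at *
  generalize g 0 - g 2 * ν = A at *
  generalize g 1 + g 2 * τ = B at *
  generalize g 2 = γ at *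
  rw [hα]
  have hQA : 3 / 4 * A ^ 2 ≤ A ^ 2 + A * B * τ + B ^ 2 * ν := by
    nlinarith [mul_nonneg (sq_nonneg B) (sub_nonneg.2 hτν), sq_nonneg (A / 2 + B * τ)]
  have hQB : 3 / 4 * (B ^ 2 * ν) ≤ A ^ 2 + A * B * τ + B ^ 2 * ν := by
    nlinarith [mul_nonneg (sq_nonneg B) (sub_nonneg.2 hτν), sq_nonneg (A + B * τ / 2)]
  have hQ : A ^ 2 + A * B * τ + B ^ 2 * ν ≤ 4 * D * ν := by
    generalize A ^ 2 + A * B * τ + B ^ 2 * ν = Q at *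
    have hQ0 : 0 ≤ Q := by nlinarith [sq_nonneg A]
    have : x * Q ≤ 4 * D := by nlinarith
    calc Q = (x * Q) * ν := by linear_combination -Q * hν
      _ ≤ 4 * D * ν := by gcongr
  have hDν : 0 < D * ν := by positivity
  have hA2 : A ^ 2 ≤ 6 * D * ν := by linarith
  have hB2 : B ^ 2 ≤ 6 * D := by
    have : B ^ 2 * ν ≤ 6 * D * ν := by linarith
    exact le_of_mul_le_mul_right this hν0
  have hA : |A| ≤ 6 * D + 1 := abs_le_of_sq_le_sq (by nlinarith) (by positivity)
  have hB : |B| ≤ 6 * D + 1 := abs_le_of_sq_le_sq (by nlinarith) (by positivity)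
  have hDA : D * |A| ≤ 1 / 2 := by
    refine abs_le_of_sq_le_sq' (a := D * |A|) ?_ (by norm_num) |>.2
    rw [mul_pow, sq_abs]
    have h24 : 24 * D ^ 3 * ν ≤ x * ν := by
      gcongr
      linarith [sq_nonneg (|q| + 1)]
    linarith [mul_le_mul_of_nonneg_left hA2 (sq_nonneg D)]
  have hγ : D * |γ| < 1 := by
    have hxq : |q| ≤ x := by linarith [sq_nonneg |q|, add_sq |q| 1]
    have hxx : 2 * x ≤ x ^ 2 := by
      rw [sq]
      gcongr
    have hpos : x ^ 2 / 2 ≤ x ^ 2 + q + 2 * ν := by linarith [neg_abs_le q]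
    have hpos' : 0 < x ^ 2 + q + 2 * ν := by linarith
    have e : |γ| * (x ^ 2 + q + 2 * ν) = |ℓ - A - B * x| := by
      rw [← abs_of_pos hpos', ← abs_mul, hℓ]
      congr 1
      ring
    have e2 : |ℓ - A - B * x| ≤ |ℓ| + |A| + |B| * x := by
      have h5 := abs_sub (ℓ - A) (B * x)
      have h6 := abs_sub ℓ A
      rw [abs_mul, abs_of_pos (show 0 < x by linarith)] at h5
      linarith
    have e3 : D * |γ| * (x ^ 2 / 2) ≤ D * |ℓ| + D * |A| + D * |B| * x := by
      calc D * |γ| * (x ^ 2 / 2) ≤ D * |γ| * (x ^ 2 + q + 2 * ν) := by gcongr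
        _ = D * |ℓ - A - B * x| := by rw [← e]; ring
        _ ≤ D * (|ℓ| + |A| + |B| * x) := by gcongr
        _ = _ := by ring
    have e4 : D * |B| * x ≤ D * (6 * D + 1) * x := by gcongr
    have e5 : D * (6 * D + 1) * x ≤ x ^ 2 / 32 := by
      have : 32 * (D * (6 * D + 1)) * x ≤ x * x := by
        gcongr
        linarith [sq_nonneg (|q| + 1)]
      linarith
    by_contra! hc
    have e6 : 1 * (x ^ 2 / 2) ≤ D * |γ| * (x ^ 2 / 2) := by gcongr
    linarith
  refine ⟨hγ, ?_⟩
  calc D * |A + γ * ν| ≤ D * (|A| + |γ| * ν) := by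
        gcongr
        exact (abs_add_le _ _).trans_eq (by rw [abs_mul, abs_of_pos hν0])
    _ = D * |A| + D * |γ| * ν := by ring
    _ < 1 := by nlinarith

theorem exists_zpow_orbit {H : M3} (hH : H.det = 1) {x : ℝ} (hx : x ≠ 0)
    {ℓ : (Fin 3 → ℤ) → ℝ} (hℓ : ∀ v, ℓ (H.mulVec v) = x * ℓ v) (v : Fin 3 → ℤ) (k : ℤ) :
    ∃ w, ℓ w = x ^ k * ℓ v ∧ (krylov H w).det = (krylov H v).det := by
  induction k with
  | zero => exact ⟨v, by simp, rfl⟩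
  | succ n ih =>
    obtain ⟨w, hw, hw'⟩ := ih
    refine ⟨H.mulVec w, ?_, by rw [det_krylov_mulVec_self hH, hw']⟩
    rw [hℓ, hw, zpow_add_one₀ hx]
    ring
  | pred n ih =>
    obtain ⟨w, hw, hw'⟩ := ih
    have hw0 : H.mulVec (H.adjugate.mulVec w) = w := by
      rw [Matrix.mulVec_mulVec, Matrix.mul_adjugate, hH, one_smul, Matrix.one_mulVec]
    refine ⟨H.adjugate.mulVec w, ?_, by rw [← det_krylov_mulVec_self hH, hw0, hw']⟩
    have := hℓ (H.adjugate.mulVec w)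
    rw [hw0, hw] at this
    rw [zpow_sub_one₀ hx]
    field_simp
    linarith

/-- An integer vector whose Krylov determinant is nonzero has Krylov determinant at least the
Hessenberg complexity, provided the trace is large compared with the remaining data. -/
theorem exists_trace_bound (a11 a12 a21 a22 a32 q : ℤ) (h21 : 0 < a21) (h32 : 0 < a32) :
    ∃ R₀ : ℤ, ∀ b c d : ℤ, (!![a11, a12, b; a21, a22, c; 0, a32, d] : M3).det = 1 →
      q = -(a11 * a22 - a12 * a21 + a11 * d + a22 * d - a32 * c) → R₀ ≤ a11 + a22 + d →
      ∀ v, (krylov !![a11, a12, b; a21, a22, c; 0, a32, d] v).det ≠ 0 →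
        a21 ^ 2 * a32 ≤ |(krylov !![a11, a12, b; a21, a22, c; 0, a32, d] v).det| := by
  have h21' : (0 : ℝ) < a21 := by exact_mod_cast h21
  have h32' : (0 : ℝ) < a32 := by exact_mod_cast h32
  obtain ⟨L, hL2, hL⟩ := exists_small_coeffs q (a21 * a32) (by positivity)
  obtain ⟨R₀, hR₀⟩ := exists_root_ge q L
  refine ⟨⌈R₀⌉, fun b c d hdet hq hR v hv => ?_⟩
  obtain ⟨x, hxL, hx⟩ := hR₀ ((a11 + a22 + d : ℤ) : ℝ) (Int.ceil_le.1 hR)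
  set R : ℝ := ((a11 + a22 + d : ℤ) : ℝ) with hRdef
  have hx0 : 0 < x := by linarith
  set H : M3 := !![a11, a12, b; a21, a22, c; 0, a32, d] with hH
  -- the change of basis between the standard basis and `e₁, H e₁, H² e₁`
  set P : Matrix (Fin 3) (Fin 3) ℝ :=
    !![1, a11, a11 ^ 2 + a12 * a21; 0, a21, a21 * (a11 + a22); 0, 0, a21 * a32] with hP
  set P' : Matrix (Fin 3) (Fin 3) ℝ :=
    !![1, -a11 / a21, (a11 * a22 - a12 * a21) / (a21 * a32);
      0, 1 / a21, -(a11 + a22) / (a21 * a32); 0, 0, 1 / (a21 * a32)] with hP'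
  have hPP' : P * P' = 1 := by
    ext i j
    fin_cases i <;> fin_cases j <;>
      simp [hP, hP', Matrix.mul_apply, Fin.sum_univ_three] <;> field_simp <;> ring
  have hPinv : P' * P = 1 := mul_eq_one_comm.1 hPP'
  have hdetP : P.det = a21 ^ 2 * a32 := by
    simp [hP, Matrix.det_fin_three]
    ring
  have hdet' : (a11 : ℝ) * a22 * d - a11 * c * a32 - a12 * a21 * d + b * a21 * a32 = 1 := by
    have := hdet
    simp [hH, Matrix.det_fin_three] at this
    exact_mod_cast this
  have hq' : (q : ℝ) = -(a11 * a22 - a12 * a21 + a11 * d + a22 * d - a32 * c) := by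
    exact_mod_cast hq
  have hPC : P * cubicCompanion q R = H.map (Int.cast : ℤ → ℝ) * P := by
    ext i j
    fin_cases i <;> fin_cases j <;>
      simp [hP, hH, cubicCompanion, Matrix.mul_apply, Fin.sum_univ_three, hRdef, hq'] <;>
      linarith
  have hPinvH : P' * H.map (Int.cast : ℤ → ℝ) = cubicCompanion q R * P' := by
    calc P' * H.map (Int.cast : ℤ → ℝ) = P' * (H.map (Int.cast : ℤ → ℝ) * P) * P' := by
          rw [Matrix.mul_assoc, Matrix.mul_assoc, hPP', Matrix.mul_one]
      _ = _ := by rw [← hPC, ← Matrix.mul_assoc, hPinv, Matrix.one_mul]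
  set coord : (Fin 3 → ℤ) → Fin 3 → ℝ := fun u => P'.mulVec (fun i => (u i : ℝ)) with hcoord
  have hcoordH : ∀ u, coord (H.mulVec u) = (cubicCompanion q R).mulVec (coord u) := by
    intro u
    have : (fun i => ((H.mulVec u) i : ℝ))
        = (H.map (Int.cast : ℤ → ℝ)).mulVec (fun i => (u i : ℝ)) := by
      ext i
      simp [Matrix.mulVec, dotProduct]
    rw [hcoord]
    simp only [this, Matrix.mulVec_mulVec, hPinvH]
  obtain ⟨ν, hν⟩ : ∃ ν, x * ν = 1 := ⟨x⁻¹, mul_inv_cancel₀ hx0.ne'⟩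
  set τ := -(q : ℝ) * ν - ν ^ 2 with hτ
  have hRτ : R = x + τ := by
    have : x ^ 2 * (R - (x + τ)) = 0 := by
      rw [hτ]
      linear_combination -hx + (q * x + x * ν + 1) * hν
    rcases mul_eq_zero.1 this with h | h
    · exact absurd h (by positivity)
    · linarith
  have hdetK : ∀ u, ((krylov H u).det : ℝ)
      = a21 ^ 2 * a32 * (quadEval x (coord u) * quadNorm ν τ (coord u)) := by
    intro u
    rw [← det_krylov_cubicCompanion hν hτ hRτ, ← hdetP, ← Matrix.det_mul, mul_krylov hPC, hcoord,
      Matrix.mulVec_mulVec, hPP', Matrix.one_mulVec, det_krylov_intCast]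
  have hv0 : quadEval x (coord v) ≠ 0 := by
    intro h
    have := hdetK v
    rw [h] at this
    rw [zero_mul, mul_zero] at this
    exact hv (by exact_mod_cast this)
  by_contra! hlt
  -- multiplying by a power of `H` moves `v` into a fundamental domain
  obtain ⟨n, hn1, hn2⟩ := exists_mem_Ico_zpow
    (x := 4 * (a21 * a32 : ℝ) * |quadEval x (coord v)|) (y := x) (by positivity) (by linarith)
  obtain ⟨w, hw, hwdet⟩ := exists_zpow_orbit hdet hx0.ne' (ℓ := fun u => quadEval x (coord u))
    (fun u => by simp only [hcoordH, quadEval_cubicCompanion hx]) v (1 - n)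
  rw [← hwdet] at hv hlt
  have hpos : 0 < x ^ (1 - n) := zpow_pos hx0 _
  have hwabs : 4 * (a21 * a32 : ℝ) * |quadEval x (coord w)|
      = x ^ (1 - n) * (4 * (a21 * a32 : ℝ) * |quadEval x (coord v)|) := by
    rw [hw, abs_mul, abs_of_pos hpos]
    ring
  have hlo : x ≤ 4 * (a21 * a32 : ℝ) * |quadEval x (coord w)| := by
    rw [hwabs]
    calc x = x ^ (1 - n) * x ^ n := by rw [← zpow_add₀ hx0.ne']; simp
      _ ≤ _ := by gcongr
  have hhi : 4 * (a21 * a32 : ℝ) * |quadEval x (coord w)| < x ^ 2 := by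
    rw [hwabs]
    calc _ < x ^ (1 - n) * x ^ (n + 1) := by gcongr
      _ = x ^ 2 := by
        rw [← zpow_add₀ hx0.ne', show 1 - n + (n + 1) = ((2 : ℕ) : ℤ) by push_cast; ring,
          zpow_natCast]
  have hN : (0 : ℝ) < a21 ^ 2 * a32 := by positivity
  have hnorm : |quadEval x (coord w)| * quadNorm ν τ (coord w) < 1 := by
    have h1 : |((krylov H w).det : ℝ)| < a21 ^ 2 * a32 := by exact_mod_cast hlt
    rw [hdetK, abs_mul, abs_of_pos hN, abs_mul] at h1
    have h2 := lt_of_mul_lt_mul_left (h1.trans_eq (mul_one _).symm) hN.le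
    exact (mul_le_mul_of_nonneg_left (le_abs_self _) (abs_nonneg _)).trans_lt h2
  obtain ⟨hg2, hg0⟩ := hL x hxL ν τ hν hτ (coord w) hlo hhi hnorm
  have hc2 : (a21 * a32 : ℝ) * coord w 2 = (w 2 : ℤ) := by
    simp [hcoord, hP', dotProduct, Fin.sum_univ_three]
    field_simp
  have hw2 : w 2 = 0 := by
    rw [← abs_of_pos (show (0 : ℝ) < a21 * a32 by positivity), ← abs_mul, hc2] at hg2
    exact Int.abs_lt_one_iff.1 (by exact_mod_cast hg2)
  have hc1 : (a21 : ℝ) * coord w 1 = (w 1 : ℤ) := by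
    simp [hcoord, hP', dotProduct, Fin.sum_univ_three, hw2]
    field_simp
  have hc0 : (a21 * a32 : ℝ) * coord w 0 = (a32 * (a21 * w 0 - a11 * w 1) : ℤ) := by
    simp [hcoord, hP', dotProduct, Fin.sum_univ_three, hw2]
    field_simp
    ring
  have hw01 : a21 * w 0 - a11 * w 1 = 0 := by
    rw [← abs_of_pos (show (0 : ℝ) < a21 * a32 by positivity), ← abs_mul, hc0] at hg0
    have := (Int.abs_lt_one_iff (a := a32 * (a21 * w 0 - a11 * w 1))).1 (by exact_mod_cast hg0)
    exact (mul_eq_zero.1 this).resolve_left h32.ne'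
  have hcop : IsCoprime a21 a11 := by
    refine ⟨b * a32 - a12 * d, a22 * d - c * a32, ?_⟩
    have : a11 * a22 * d - a11 * c * a32 - a12 * a21 * d + b * a21 * a32 = 1 := by
      exact_mod_cast hdet'
    linear_combination this
  obtain ⟨j, hj⟩ : a21 ∣ w 1 := hcop.dvd_of_dvd_mul_left ⟨w 0, by linarith⟩
  have e2 : coord w 2 = 0 := by
    rw [hw2] at hc2
    exact (mul_eq_zero.1 (hc2.trans Int.cast_zero)).resolve_left (by positivity)
  have e0 : coord w 0 = 0 := by
    rw [hw01, mul_zero] at hc0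
    exact (mul_eq_zero.1 (hc0.trans Int.cast_zero)).resolve_left (by positivity)
  have e1 : coord w 1 = j := by
    rw [hj, Int.cast_mul] at hc1
    exact mul_left_cancel₀ h21'.ne' hc1
  have hfin : (krylov H w).det = a21 ^ 2 * a32 * j ^ 3 := by
    have := hdetK w
    rw [quadEval, quadNorm, e0, e1, e2] at this
    have h' : ((krylov H w).det : ℝ) = a21 ^ 2 * a32 * j ^ 3 := by
      linear_combination this + (a21 ^ 2 * a32 * j ^ 3 : ℝ) * hν
    exact_mod_cast h'
  have hj0 : j ^ 3 ≠ 0 := by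
    intro h
    rw [hfin, h] at hv
    simp at hv
  rw [hfin, abs_mul, abs_of_pos (by positivity : 0 < a21 ^ 2 * a32)] at hlt
  have := Int.one_le_abs hj0
  nlinarith [(by positivity : 0 < a21 ^ 2 * a32)]

theorem hessComplexity_eq_abs_det_krylov {M M' : M3} (hM' : IsPerfectHessenberg M')
    (h : IntegerConjugate M M') :
    ∃ v, HessComplexity M' = |(krylov M v).det| ∧ (krylov M v).det ≠ 0 := by
  obtain ⟨X, hX, rfl⟩ := h
  have hu : IsUnit X.det := Int.isUnit_iff.2 hX
  obtain ⟨h20, h00, h10, h01, h21, -⟩ := hM'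
  have hpos : 0 < HessComplexity (X * M * X⁻¹) :=
    mul_pos (pow_pos (h00.trans_lt h10) 2) (h01.trans_lt h21)
  have hK : HessComplexity (X * M * X⁻¹) = X.det * (krylov M (X⁻¹.mulVec ![1, 0, 0])).det := by
    have hXM : X * M = X * M * X⁻¹ * X := by
      rw [Matrix.mul_assoc _ _ X, Matrix.nonsing_inv_mul X hu, Matrix.mul_one]
    rw [← det_krylov_single_zero h20, ← Matrix.det_mul, mul_krylov hXM, Matrix.mulVec_mulVec,
      Matrix.mul_nonsing_inv X hu, Matrix.one_mulVec]
  refine ⟨X⁻¹.mulVec ![1, 0, 0], ?_, fun h0 => ?_⟩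
  · rw [← abs_of_pos hpos, hK, abs_mul, Int.isUnit_iff_abs_eq.1 hu, one_mul]
  · rw [hK, h0, mul_zero] at hpos
    exact hpos.false

/-- Along any NRS-ray of direction (a11,a21), all but finitely many matrices are
ς-reduced. -/
theorem asymptotic_sigma_reducibility_dir_a11_a21
    (a11 a12 a13 a21 a22 a23 a32 a33 m n : ℤ)
    (hdet : (Hmat a11 a12 a13 a21 a22 a23 a32 a33 0 0).det = 1)
    (h11 : 0 ≤ a11) (h1121 : a11 < a21)
    (h12 : 0 ≤ a12) (h1232 : a12 < a32)
    (h22 : 0 ≤ a22) (h2232 : a22 < a32)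
    (hray : ∀ t : ℤ, 0 ≤ t →
      Irreducible
        ((Hmat a11 a12 a13 a21 a22 a23 a32 a33 (m + a11 * t) (n + a21 * t)).charpoly.map
          (Int.castRingHom ℚ)) ∧
      ∃ z : ℂ, z.im ≠ 0 ∧
        Polynomial.aeval z
          (Hmat a11 a12 a13 a21 a22 a23 a32 a33 (m + a11 * t) (n + a21 * t)).charpoly = 0) :
    ∃ T : ℤ, ∀ t : ℤ, T < t →
      SigmaReduced (Hmat a11 a12 a13 a21 a22 a23 a32 a33 (m + a11 * t) (n + a21 * t)) := by
  have h21 : 0 < a21 := h11.trans_lt h1121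
  have h32 : 0 < a32 := h12.trans_lt h1232
  set d := a32 * n + a33 with hd
  set c := a21 * m + a22 * n + a23 with hc
  obtain ⟨R₀, hR₀⟩ := exists_trace_bound a11 a12 a21 a22 a32
    (-(a11 * a22 - a12 * a21 + a11 * d + a22 * d - a32 * c)) h21 h32
  refine ⟨|R₀ - (a11 + a22 + d)|, fun t ht => ?_⟩
  have hdet1 : (Hmat a11 a12 a13 a21 a22 a23 a32 a33 (m + a11 * t) (n + a21 * t)).det = 1 := by
    rw [← hdet]
    simp [Hmat, Matrix.det_fin_three]
    ring
  refine ⟨hdet1, by simp [IsPerfectHessenberg, Hmat, *], fun M' _ hM' hconj => ?_⟩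
  obtain ⟨v, hv, hv0⟩ := hessComplexity_eq_abs_det_krylov hM' hconj
  rw [hv]
  refine hR₀ _ _ _ hdet1 (by rw [hc, hd]; ring) ?_ v hv0
  have ht' := le_abs_self (R₀ - (a11 + a22 + d))
  have ht0 : 0 ≤ t := (abs_nonneg _).trans ht.le
  have hk : 1 ≤ a21 * a32 := Int.add_one_le_iff.2 (mul_pos h21 h32)
  have : t ≤ a21 * a32 * t := by nlinarith
  rw [hd] at ht' ht
  nlinarith
end

section
/- (Asymptotic uniqueness of the ς-reduced representative along rays of direction (−1,0).) Assume 0 ≤ a11 < a21, 0 ≤ a12 < a32, 0 ≤ a22 < a32, and fix integers m, n. Suppose that for every integer t ≥ 0 the matrix H(m−t, n) has characteristic polynomial irreducible over ℚ and has a non-real complex eigenvalue. Then there exists T such that for every integer t > T any two ς-reduced matrices integer conjugate to H(m−t, n) are equal; i.e., H(m−t,n) has exactly one integer conjugate ς-reduced matrix. -/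
lemma hessComplexity_pos {M : M3} (hM : IsPerfectHessenberg M) : 0 < HessComplexity M := by
  obtain ⟨-, h1, h2, h3, h4, -, -⟩ := hM
  have h10 : 0 < M 1 0 := h1.trans_lt h2
  have h21 : 0 < M 2 1 := h3.trans_lt h4
  unfold HessComplexity
  positivity

/-- The determinant of the Hankel matrix of a sequence obeying
`h (k + 3) = τ h (k + 2) - σ h (k + 1) + c μ h k` factors along the factorization
`(X - μ) (X² - b X + c)` of the characteristic polynomial of the recurrence. -/
lemma hankel_det_factor {R : Type*} [CommRing R] (μ b c s z p h₃ h₄ : R)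
    (h3 : h₃ = (b + μ) * p - (c + b * μ) * z + c * μ * s)
    (h4 : h₄ = (b + μ) * h₃ - (c + b * μ) * p + c * μ * z) :
    s * (p * h₄ - h₃ ^ 2) - z * (z * h₄ - h₃ * p) + p * (z * h₃ - p ^ 2) =
      -((p - b * z + c * s) *
        ((p - μ * z) ^ 2 - b * (z - μ * s) * (p - μ * z) + c * (z - μ * s) ^ 2)) := by
  subst h4 h3
  ring

/-- An integer point of small Hankel determinant whose `μ`-component lies in the window
`[c / 4, c² / 4)` is a multiple of the first coordinate vector. -/
lemma eq_zero_of_window (μ b c C : ℝ) (s z p : ℤ)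
    (hcμ : c * μ = 1) (hC : 1 ≤ C) (hcC : 1000 * C ≤ c) (hcb : 1000 * b ^ 2 ≤ c)
    (hD : |(p - b * z + c * s) *
        ((p - μ * z) ^ 2 - b * (z - μ * s) * (p - μ * z) + c * (z - μ * s) ^ 2)| ≤ C)
    (hlo : c / 4 ≤ |p - b * z + c * s|) (hhi : |p - b * z + c * s| < c / 4 * c) :
    z = 0 ∧ p = 0 := by
  have hc : 1000 ≤ c := by linarith
  have hμ : 0 < μ := by
    by_contra h
    nlinarith [mul_nonneg (by linarith : 0 ≤ c) (by linarith : 0 ≤ -μ)]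
  obtain ⟨g, hg⟩ : ∃ g : ℝ, g = z - μ * s := ⟨_, rfl⟩
  obtain ⟨k, hk⟩ : ∃ k : ℝ, k = p - μ * z := ⟨_, rfl⟩
  obtain ⟨u, hu⟩ : ∃ u : ℝ, u = p - b * z + c * s := ⟨_, rfl⟩
  rw [← hg, ← hk, ← hu] at hD
  rw [← hu] at hlo hhi
  obtain ⟨Q, hQ⟩ : ∃ Q : ℝ, Q = k ^ 2 - b * g * k + c * g ^ 2 := ⟨_, rfl⟩
  rw [← hQ, abs_mul] at hD
  have hQ' : Q = (k - b * g / 2) ^ 2 + (c - b ^ 2 / 4) * g ^ 2 := by rw [hQ]; ring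
  have hg2 := sq_nonneg g
  have hcg : c / 2 * g ^ 2 ≤ (c - b ^ 2 / 4) * g ^ 2 := by gcongr; linarith
  have hQg : c / 2 * g ^ 2 ≤ Q := by linarith [sq_nonneg (k - b * g / 2)]
  have hQ0 : 0 ≤ Q := le_trans (by positivity) hQg
  have hcQ : c * Q ≤ 4 * C := by
    rw [abs_of_nonneg hQ0] at hD
    nlinarith [mul_le_mul_of_nonneg_right hlo hQ0]
  have hQs : Q ≤ 1 / 250 := by
    by_contra h
    nlinarith
  have hcg8 : |c * g| ≤ c / 8 := by
    apply abs_le_of_sq_le_sq _ (by linarith)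
    nlinarith [mul_le_mul_of_nonneg_left hQg (by linarith : 0 ≤ c)]
  have hbg : |b * g / 2| ≤ 1 / 8 := by
    apply abs_le_of_sq_le_sq _ (by norm_num)
    nlinarith [mul_le_mul_of_nonneg_right hcb hg2]
  have hkb : |k - b * g / 2| ≤ 1 / 8 := by
    apply abs_le_of_sq_le_sq _ (by norm_num)
    nlinarith [mul_nonneg (by linarith : 0 ≤ c / 2) hg2]
  rw [abs_le] at hcg8 hbg hkb
  rw [abs_lt] at hhi
  have hb : b ≤ c := by nlinarith [sq_nonneg (b - 1)]
  have hkey : (z : ℝ) * (c ^ 2 - b + μ) = u - k + c * (c * g) := by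
    rw [hu, hk, hg]
    linear_combination (c * s) * hcμ
  have hbig : c ^ 2 / 2 ≤ c ^ 2 - b + μ := by nlinarith
  have hz : z = 0 := by
    have hc2 : 1000 ≤ c ^ 2 := by nlinarith only [hc]
    have hup := mul_le_mul_of_nonneg_left hcg8.2 (by linarith : 0 ≤ c)
    have hdown := mul_le_mul_of_nonneg_left hcg8.1 (by linarith : 0 ≤ c)
    have h1 : (z : ℝ) < 1 := by
      by_contra h
      have := mul_le_mul_of_nonneg_right (not_lt.mp h) (by linarith : 0 ≤ c ^ 2 - b + μ)
      linarith
    have h2 : (-1 : ℝ) < z := by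
      by_contra h
      have := mul_le_mul_of_nonneg_right (not_lt.mp h) (by linarith : 0 ≤ c ^ 2 - b + μ)
      linarith
    have h1' : z < 1 := by exact_mod_cast h1
    have h2' : -1 < z := by exact_mod_cast h2
    omega
  subst hz
  have hp : (p : ℝ) = k := by rw [hk]; simp
  refine ⟨rfl, ?_⟩
  have h1 : (p : ℝ) < 1 := by rw [hp]; linarith
  have h2 : (-1 : ℝ) < p := by rw [hp]; linarith
  have h1' : p < 1 := by exact_mod_cast h1
  have h2' : -1 < p := by exact_mod_cast h2
  omega

/-- A predicate on the reals stable under scaling by `c` and by `c⁻¹` that holds at some positive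
number holds somewhere in the window `[a, a * c)`. -/
lemma exists_mem_window {P : ℝ → Prop} {c a x : ℝ} (hc : 1 < c) (ha : 0 < a) (hx : 0 < x)
    (hP : P x) (hmul : ∀ y, P y → P (y * c)) (hdiv : ∀ y, P y → P (y * c⁻¹)) :
    ∃ y, P y ∧ a ≤ y ∧ y < a * c := by
  have hc0 : c ≠ 0 := by positivity
  have hall : ∀ k : ℤ, P (x * c ^ k) := by
    intro k
    induction k with
    | zero => simpa using hP
    | succ i ih =>
      rw [zpow_add_one₀ hc0, ← mul_assoc]
      exact hmul _ ih
    | pred i ih =>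
      rw [zpow_sub_one₀ hc0, ← mul_assoc]
      exact hdiv _ ih
  obtain ⟨k, hk1, hk2⟩ := exists_mem_Ico_zpow (div_pos hx ha) hc
  have hck : 0 < c ^ k := by positivity
  refine ⟨_, hall (-k), ?_, ?_⟩
  · rw [zpow_neg, ← div_eq_mul_inv, le_div_iff₀ hck]
    rwa [le_div_iff₀ ha, mul_comm] at hk1
  · rw [zpow_neg, ← div_eq_mul_inv, div_lt_iff₀ hck]
    rw [div_lt_iff₀ ha, zpow_add_one₀ hc0] at hk2
    linarith

/-- For large `σ` the polynomial `X³ - τ X² + σ X - 1` factors as `(X - μ) (X² - b X + c)` with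
`c` large compared to `b` and to a given constant. -/
lemma exists_cubic_factor (τ C : ℝ) (hC : 0 ≤ C) :
    ∃ S : ℝ, ∀ σ : ℝ, S < σ → ∃ μ b c : ℝ, τ = b + μ ∧ σ = c + b * μ ∧ c * μ = 1 ∧
      C ≤ c ∧ 1000 * b ^ 2 ≤ c := by
  refine ⟨2 * C + 2000 * (|τ| + 1) ^ 2, fun σ hσ => ?_⟩
  have hτ := abs_nonneg τ
  have hτ' := le_abs_self τ
  have hτ'' := neg_abs_le τ
  have hσ1 : 2000 * (|τ| + 1) ≤ σ := by nlinarith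
  have hσ0 : 0 < σ := by linarith
  have hroot : ∃ μ ∈ Set.Icc (0 : ℝ) (2 / σ), μ ^ 3 - τ * μ ^ 2 + σ * μ - 1 = 0 := by
    apply intermediate_value_Icc (f := fun μ : ℝ => μ ^ 3 - τ * μ ^ 2 + σ * μ - 1)
      (by positivity) (by fun_prop)
    refine ⟨by norm_num, ?_⟩
    have h1 : σ * (2 / σ) = 2 := by field_simp
    have h2 : 0 < 2 / σ := by positivity
    have h3 : |τ| * (2 / σ) ≤ 1 := by
      rw [mul_div_assoc', div_le_one hσ0]; linarith
    have h4 : 2 / σ ≤ 1 := by rw [div_le_one hσ0]; linarith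
    have h5 : τ * (2 / σ) ^ 2 ≤ 1 := by
      have := mul_le_mul_of_nonneg_right hτ' (sq_nonneg (2 / σ))
      nlinarith
    have h6 : 0 ≤ (2 / σ) ^ 3 := by positivity
    linarith
  obtain ⟨μ, ⟨hμ0, hμ1⟩, hμ⟩ := hroot
  have hμpos : 0 < μ := lt_of_le_of_ne hμ0 (by rintro rfl; norm_num at hμ)
  have hc : σ / 2 ≤ μ⁻¹ := by
    rw [le_inv_comm₀ (by positivity) hμpos]
    simpa using hμ1
  have hμle : μ ≤ 1 := le_trans hμ1 (by rw [div_le_one hσ0]; linarith)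
  refine ⟨μ, τ - μ, μ⁻¹, by ring, ?_, inv_mul_cancel₀ hμpos.ne', ?_, ?_⟩
  · field_simp
    linear_combination hμ
  · nlinarith [sq_nonneg (|τ| + 1)]
  · have : (τ - μ) ^ 2 ≤ (|τ| + 1) ^ 2 := by
      apply sq_le_sq'
      · linarith
      · linarith
    linarith

/-- The sum of the principal `2 × 2` minors. -/
def principalMinorSum (M : M3) : ℤ :=
  M 0 0 * M 1 1 - M 0 1 * M 1 0 + (M 0 0 * M 2 2 - M 0 2 * M 2 0) +
    (M 1 1 * M 2 2 - M 1 2 * M 2 1)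

/-- The rows `e₃ᵀ M⁻¹`, `e₃ᵀ`, `e₃ᵀ M` of a Hessenberg matrix `M` of determinant one. -/
def thirdRowOrbit (M : M3) : M3 :=
  !![M 1 0 * M 2 1, -(M 0 0 * M 2 1), M 0 0 * M 1 1 - M 0 1 * M 1 0;
     0, 0, 1;
     0, M 2 1, M 2 2]

/-- In the basis `thirdRowOrbit M` of the dual space, `M` acts by a companion matrix. -/
lemma thirdRowOrbit_mul (M : M3) (hdet : M.det = 1) (h20 : M 2 0 = 0) :
    thirdRowOrbit M * M =
      !![0, 1, 0; 0, 0, 1; 1, -principalMinorSum M, M.trace] * thirdRowOrbit M := by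
  rw [Matrix.det_fin_three] at hdet
  simp only [h20] at hdet
  ext i j
  fin_cases i <;> fin_cases j <;>
    simp [thirdRowOrbit, principalMinorSum, Matrix.mul_apply, Fin.sum_univ_three,
      Matrix.trace_fin_three, h20] <;> first | ring1 | linear_combination hdet

lemma det_thirdRowOrbit (M : M3) :
    (thirdRowOrbit M).det = -(M 1 0 * M 2 1 ^ 2) := by
  simp [thirdRowOrbit, Matrix.det_fin_three]
  ring

/-- The Hankel determinant of the first column of `Z`, where `Z` intertwines a Hessenberg matrix
`M'` with a companion matrix, is `det Z` times the Hessenberg complexity of `M'`. -/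
lemma hankel_det_eq (Z M' : M3) (σ τ h₃ h₄ : ℤ) (h20 : M' 2 0 = 0)
    (hZ : Z * M' = !![0, 1, 0; 0, 0, 1; 1, -σ, τ] * Z)
    (h3 : h₃ = τ * Z 2 0 - σ * Z 1 0 + Z 0 0) (h4 : h₄ = τ * h₃ - σ * Z 2 0 + Z 1 0) :
    Z 0 0 * (Z 2 0 * h₄ - h₃ ^ 2) - Z 1 0 * (Z 1 0 * h₄ - h₃ * Z 2 0) +
      Z 2 0 * (Z 1 0 * h₃ - Z 2 0 ^ 2) = Z.det * HessComplexity M' := by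
  have hent := fun i j => congrFun (congrFun hZ i) j
  have e00 := hent 0 0
  have e10 := hent 1 0
  have e20 := hent 2 0
  have e01 := hent 0 1
  have e11 := hent 1 1
  have e21 := hent 2 1
  simp [Matrix.mul_apply, Fin.sum_univ_three, h20] at e00 e10 e20 e01 e11 e21
  have hH : (!![Z 0 0, Z 1 0, Z 2 0; Z 1 0, Z 2 0, h₃; Z 2 0, h₃, h₄] : M3) =
      Z * !![1, M' 0 0, M' 0 0 ^ 2 + M' 0 1 * M' 1 0;
        0, M' 1 0, M' 1 0 * M' 0 0 + M' 1 1 * M' 1 0; 0, 0, M' 2 1 * M' 1 0] := by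
    ext i j
    fin_cases i <;> fin_cases j <;> simp [Matrix.mul_apply, Fin.sum_univ_three]
    · linear_combination -e00
    · linear_combination -e10 - M' 0 0 * e00 - M' 1 0 * e01
    · linear_combination -e10
    · linear_combination h3 - e20 - M' 0 0 * e10 - M' 1 0 * e11
    · linear_combination h3 - e20
    · linear_combination h4 + τ * h3 - M' 0 0 * e20 - M' 1 0 * e21 - e00 + σ * e10 - τ * e20
  have hd := congrArg Matrix.det hH
  rw [Matrix.det_mul] at hd
  simp only [Matrix.det_fin_three _, HessComplexity] at hd ⊢
  simp at hd
  linear_combination hd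

lemma eq_zero_of_residues {a a' d y : ℤ} (ha : 0 ≤ a) (had : a < d) (ha' : 0 ≤ a') (had' : a' < d)
    (h : a = a' + y * d) : y = 0 := by
  have h1 : y < 1 := by
    by_contra hy
    nlinarith
  have h2 : -1 < y := by
    by_contra hy
    nlinarith
  omega

/-- Perfect Hessenberg matrices are determined by the first basis vector. -/
lemma eq_of_intertwine_of_first_column {M M' Y : M3} (hM : IsPerfectHessenberg M)
    (hM' : IsPerfectHessenberg M') (hY : M * Y = Y * M')
    (hdet : IsUnit Y.det) (h00 : Y 0 0 = 1) (h10 : Y 1 0 = 0) (h20 : Y 2 0 = 0) : M' = M := by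
  obtain ⟨m20, m1, m2, m3, m4, m5, m6⟩ := hM
  obtain ⟨m20', m1', m2', m3', m4', m5', m6'⟩ := hM'
  have hent := fun i j => congrFun (congrFun hY i) j
  have e00 := hent 0 0
  have e10 := hent 1 0
  have e20 := hent 2 0
  have e01 := hent 0 1
  have e11 := hent 1 1
  have e21 := hent 2 1
  simp only [Matrix.mul_apply, Fin.sum_univ_three, h00, h10, h20, m20, m20', mul_zero, zero_mul,
    mul_one, one_mul, add_zero, zero_add] at e00 e10 e20 e01 e11 e21
  have y21 : Y 2 1 = 0 := by
    rcases mul_eq_zero.mp e20.symm with h | h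
    · exact h
    · omega
  have hd : Y.det = Y 1 1 * Y 2 2 := by
    rw [Matrix.det_fin_three, h00, h10, h20, y21]; ring
  rw [hd, IsUnit.mul_iff, Int.isUnit_iff, Int.isUnit_iff] at hdet
  obtain ⟨hu1, hu2⟩ := hdet
  have y11 : Y 1 1 = 1 := by
    rcases hu1 with h | h
    · exact h
    · rw [h] at e10; omega
  rw [y11, one_mul] at e10
  have y01 : Y 0 1 = 0 :=
    eq_zero_of_residues m1 m2 m1' (e10 ▸ m2') (by rw [e10]; linear_combination e00)
  rw [y11, y21] at e21
  have y22 : Y 2 2 = 1 := by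
    rcases hu2 with h | h
    · exact h
    · rw [h] at e21; omega
  rw [y22] at e21
  have y12 : Y 1 2 = 0 := by
    rw [y11, y01, y21] at e11
    exact eq_zero_of_residues m5 m6 m5' (by omega) (by linear_combination e11 - Y 1 2 * e21)
  have y02 : Y 0 2 = 0 := by
    rw [y11, y01, y21] at e01
    exact eq_zero_of_residues m3 m4 m3' (by omega) (by linear_combination e01 - Y 0 2 * e21)
  have hY1 : Y = 1 := by
    ext i j
    fin_cases i <;> fin_cases j <;>
      simp [h00, h10, h20, y01, y11, y21, y02, y12, y22]
  rw [hY1] at hY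
  simpa using hY.symm

lemma IntegerConjugate.symm {M M' : M3} (h : IntegerConjugate M M') : IntegerConjugate M' M := by
  obtain ⟨X, hX, rfl⟩ := h
  have hXu : IsUnit X.det := Int.isUnit_iff.mpr hX
  refine ⟨X⁻¹, Int.isUnit_iff.mp (X.isUnit_nonsing_inv_det hXu), ?_⟩
  rw [X.nonsing_inv_nonsing_inv hXu, ← mul_assoc, ← mul_assoc, X.nonsing_inv_mul hXu, one_mul,
    mul_assoc, X.nonsing_inv_mul hXu, mul_one]

lemma IntegerConjugate.exists_intertwine {M M' : M3} (h : IntegerConjugate M M') :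
    ∃ Y : M3, IsUnit Y.det ∧ M * Y = Y * M' := by
  obtain ⟨X, hX, rfl⟩ := h
  have hXu : IsUnit X.det := Int.isUnit_iff.mpr hX
  refine ⟨X⁻¹, X.isUnit_nonsing_inv_det hXu, ?_⟩
  rw [← mul_assoc, ← mul_assoc, X.nonsing_inv_mul hXu, one_mul]

/-- Among matrices with given trace and given `a₂₁ a₃₂`, a perfect Hessenberg matrix whose second
invariant is large is the only perfect Hessenberg matrix of at most its complexity in its class. -/
lemma eq_of_complexity_le (τ q : ℤ) :
    ∃ S : ℤ, ∀ M M' : M3, M.det = 1 → IsPerfectHessenberg M → M.trace = τ →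
      M 1 0 * M 2 1 = q → S < principalMinorSum M → IsPerfectHessenberg M' →
      IntegerConjugate M M' → HessComplexity M' ≤ HessComplexity M → M' = M := by
  obtain ⟨S, hS⟩ := exists_cubic_factor τ (1000 * (|(q : ℝ)| ^ 3 + 1)) (by positivity)
  refine ⟨⌈S⌉, fun M M' hdet hM htr hq hlt hM' hconj hle => ?_⟩
  obtain ⟨μ, b, c, hτ, hσ, hcμ, hcC, hcb⟩ := hS (principalMinorSum M)
    (lt_of_le_of_lt (Int.le_ceil S) (by exact_mod_cast hlt))
  have hC1 : 1 ≤ |(q : ℝ)| ^ 3 + 1 := by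
    have : 0 ≤ |(q : ℝ)| ^ 3 := by positivity
    linarith
  have hc : 1 < c := by linarith
  have hc0 : c ≠ 0 := by positivity
  have hμ : μ = c⁻¹ := eq_inv_of_mul_eq_one_right hcμ
  set R := thirdRowOrbit M with hR
  have hRM := thirdRowOrbit_mul M hdet hM.1
  rw [← hR, htr] at hRM
  let u : M3 → ℝ := fun Z => Z 2 0 - b * Z 1 0 + c * Z 0 0
  have hu : ∀ Y : M3, u (R * (M * Y)) = μ * u (R * Y) := by
    intro Y
    rw [← mul_assoc, hRM, mul_assoc]
    generalize R * Y = Z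
    simp only [u, Matrix.mul_apply, Fin.sum_univ_three]
    simp
    rw [hσ, hτ]
    linear_combination (-(Z 0 0 : ℝ)) * hcμ
  have h10 : 0 < M 1 0 := hM.2.1.trans_lt hM.2.2.1
  have h21 : 0 < M 2 1 := hM.2.2.2.1.trans_lt hM.2.2.2.2.1
  have hdR : 0 < M 1 0 * M 2 1 ^ 2 := by positivity
  have hfac : ∀ Y : M3, IsUnit Y.det → M * Y = Y * M' →
      u (R * Y) ≠ 0 ∧ |u (R * Y) * ((((R * Y) 2 0 : ℤ) - μ * ((R * Y) 1 0 : ℤ)) ^ 2 -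
        b * (((R * Y) 1 0 : ℤ) - μ * ((R * Y) 0 0 : ℤ)) *
          (((R * Y) 2 0 : ℤ) - μ * ((R * Y) 1 0 : ℤ)) +
        c * (((R * Y) 1 0 : ℤ) - μ * ((R * Y) 0 0 : ℤ)) ^ 2)| ≤ |(q : ℝ)| ^ 3 + 1 := by
    intro Y hYd hY
    have hZ : (R * Y) * M' = !![0, 1, 0; 0, 0, 1; 1, -principalMinorSum M, τ] * (R * Y) := by
      rw [mul_assoc, ← hY, ← mul_assoc, hRM, mul_assoc]
    have hh := hankel_det_eq _ M' _ _ _ _ hM'.1 hZ rfl rfl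
    have habs : |(R * Y).det * HessComplexity M'| = M 1 0 * M 2 1 ^ 2 * HessComplexity M' := by
      rw [Matrix.det_mul, hR, det_thirdRowOrbit, abs_mul, abs_mul, Int.isUnit_iff_abs_eq.mp hYd,
        abs_neg, mul_one, abs_of_nonneg, abs_of_nonneg]
      · exact (hessComplexity_pos hM').le
      · exact hdR.le
    have hbound : M 1 0 * M 2 1 ^ 2 * HessComplexity M' ≤ |q| ^ 3 := by
      calc M 1 0 * M 2 1 ^ 2 * HessComplexity M'
          ≤ M 1 0 * M 2 1 ^ 2 * HessComplexity M := mul_le_mul_of_nonneg_left hle hdR.le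
        _ = q ^ 3 := by rw [← hq, HessComplexity]; ring
        _ ≤ |q ^ 3| := le_abs_self _
        _ = |q| ^ 3 := abs_pow q 3
    have hpos : 0 < M 1 0 * M 2 1 ^ 2 * HessComplexity M' :=
      mul_pos hdR (hessComplexity_pos hM')
    rw [← hh] at habs
    have hreal := congrArg (Int.cast : ℤ → ℝ) habs
    rw [Int.cast_abs] at hreal
    generalize R * Y = Z at *
    have hf := hankel_det_factor μ b c (Z 0 0 : ℝ) (Z 1 0) (Z 2 0) _ _ rfl rfl
    rw [hcμ, ← hτ, ← hσ] at hf
    push_cast at hreal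
    simp only [one_mul] at hf
    rw [hf, abs_neg] at hreal
    have hpos' : (0 : ℝ) < M 1 0 * M 2 1 ^ 2 * HessComplexity M' := by exact_mod_cast hpos
    have hbound' : (M 1 0 * M 2 1 ^ 2 * HessComplexity M' : ℝ) ≤ |(q : ℝ)| ^ 3 := by
      exact_mod_cast hbound
    refine ⟨fun h0 => ?_, ?_⟩
    · rw [show (Z 2 0 - b * Z 1 0 + c * Z 0 0 : ℝ) = 0 from h0] at hreal
      simp only [zero_mul, abs_zero] at hreal
      linarith
    · exact hreal.le.trans (by linarith)
  obtain ⟨Y₀, hY₀d, hY₀⟩ := hconj.exists_intertwine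
  have hMunit : IsUnit M.det := by rw [hdet]; exact isUnit_one
  obtain ⟨x, ⟨Y, hYd, hY, rfl⟩, hlo, hhi⟩ := exists_mem_window
    (P := fun x => ∃ Y : M3, IsUnit Y.det ∧ M * Y = Y * M' ∧ |u (R * Y)| = x)
    (a := c / 4) hc (by positivity) (abs_pos.mpr (hfac Y₀ hY₀d hY₀).1) ⟨Y₀, hY₀d, hY₀, rfl⟩
    (by
      rintro _ ⟨Y, hYd, hY, rfl⟩
      refine ⟨M⁻¹ * Y, ?_, ?_, ?_⟩
      · rw [Matrix.det_mul]
        exact (M.isUnit_nonsing_inv_det hMunit).mul hYd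
      · rw [← mul_assoc, M.mul_nonsing_inv hMunit, mul_assoc, ← hY, ← mul_assoc,
          M.nonsing_inv_mul hMunit]
      · have h := hu (M⁻¹ * Y)
        rw [← mul_assoc M, M.mul_nonsing_inv hMunit, one_mul] at h
        rw [h, abs_mul, hμ, abs_of_pos (by positivity : 0 < c⁻¹)]
        field_simp)
    (by
      rintro _ ⟨Y, hYd, hY, rfl⟩
      refine ⟨M * Y, ?_, ?_, ?_⟩
      · rw [Matrix.det_mul]
        exact hMunit.mul hYd
      · rw [mul_assoc, ← hY]
      · rw [hu, abs_mul, hμ, abs_of_pos (by positivity : 0 < c⁻¹), mul_comm])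
  obtain ⟨hz, hp⟩ := eq_zero_of_window μ b c _ _ _ _ hcμ hC1 hcC hcb (hfac Y hYd hY).2 hlo hhi
  have y20 : Y 2 0 = 0 := by
    simpa [hR, thirdRowOrbit, Matrix.mul_apply, Fin.sum_univ_three] using hz
  have y10 : Y 1 0 = 0 := by
    simpa [hR, thirdRowOrbit, Matrix.mul_apply, Fin.sum_univ_three, y20, h21.ne'] using hp
  have y00 : IsUnit (Y 0 0) := by
    have hd : Y.det = Y 0 0 * (Y 1 1 * Y 2 2 - Y 1 2 * Y 2 1) := by
      rw [Matrix.det_fin_three, y10, y20]; ring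
    exact isUnit_of_mul_isUnit_left (hd ▸ hYd)
  rcases Int.isUnit_iff.mp y00 with h | h
  · exact eq_of_intertwine_of_first_column hM hM' hY hYd h y10 y20
  · refine eq_of_intertwine_of_first_column hM hM' (Y := -Y) (by simp [hY]) ?_ ?_ ?_ ?_
    · rw [Matrix.det_neg]
      simpa using hYd
    · simp [h]
    · simp [y10]
    · simp [y20]

/-- Along any NRS-ray of direction (−1,0), eventually every matrix of the ray has
exactly one integer conjugate ς-reduced matrix. -/
theorem asymptotic_sigma_uniqueness_dir_neg_one_zero
    (a11 a12 a13 a21 a22 a23 a32 a33 m n : ℤ)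
    (hdet : (Hmat a11 a12 a13 a21 a22 a23 a32 a33 0 0).det = 1)
    (h11 : 0 ≤ a11) (h1121 : a11 < a21)
    (h12 : 0 ≤ a12) (h1232 : a12 < a32)
    (h22 : 0 ≤ a22) (h2232 : a22 < a32)
    (hray : ∀ t : ℤ, 0 ≤ t →
      Irreducible
        ((Hmat a11 a12 a13 a21 a22 a23 a32 a33 (m - t) n).charpoly.map
          (Int.castRingHom ℚ)) ∧
      ∃ z : ℂ, z.im ≠ 0 ∧
        Polynomial.aeval z (Hmat a11 a12 a13 a21 a22 a23 a32 a33 (m - t) n).charpoly = 0) :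
    ∃ T : ℤ, ∀ t : ℤ, T < t →
      ∃! M' : M3,
        IntegerConjugate (Hmat a11 a12 a13 a21 a22 a23 a32 a33 (m - t) n) M' ∧
        SigmaReduced M' := by
  have hdet' : ∀ k : ℤ, (Hmat a11 a12 a13 a21 a22 a23 a32 a33 k n).det = 1 := by
    intro k
    rw [← hdet]
    simp [Hmat, Matrix.det_fin_three]
    ring
  have hperf : ∀ k : ℤ, IsPerfectHessenberg (Hmat a11 a12 a13 a21 a22 a23 a32 a33 k n) := by
    intro k
    simp [IsPerfectHessenberg, Hmat, *]
  have hq : 0 < a21 * a32 := mul_pos (h11.trans_lt h1121) (h12.trans_lt h1232)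
  obtain ⟨S, hS⟩ := eq_of_complexity_le (a11 + a22 + (a32 * n + a33)) (a21 * a32)
  obtain ⟨s₀, hs₀⟩ : ∃ s₀, s₀ =
    principalMinorSum (Hmat a11 a12 a13 a21 a22 a23 a32 a33 m n) := ⟨_, rfl⟩
  refine ⟨|S - s₀|, fun t ht => ?_⟩
  have hunique := hS (Hmat a11 a12 a13 a21 a22 a23 a32 a33 (m - t) n)
  have hσ : S < principalMinorSum (Hmat a11 a12 a13 a21 a22 a23 a32 a33 (m - t) n) := by
    have h : principalMinorSum (Hmat a11 a12 a13 a21 a22 a23 a32 a33 (m - t) n) =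
        s₀ + t * (a21 * a32) := by
      rw [hs₀]
      simp [principalMinorSum, Hmat]
      ring
    rw [h]
    have h0 := abs_nonneg (S - s₀)
    have h1 := le_abs_self (S - s₀)
    nlinarith
  have hunique' := fun M' => hunique M' (hdet' _) (hperf _)
    (by simp [Hmat, Matrix.trace_fin_three]) (by simp [Hmat]) hσ
  have hrefl : IntegerConjugate (Hmat a11 a12 a13 a21 a22 a23 a32 a33 (m - t) n)
      (Hmat a11 a12 a13 a21 a22 a23 a32 a33 (m - t) n) := ⟨1, by simp, by simp⟩
  refine ⟨_, ⟨hrefl, hdet' _, hperf _, fun M' _ hM' hconj => ?_⟩, fun M' hM' => ?_⟩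
  · by_contra! hlt
    have := hunique' M' hM' hconj hlt.le
    rw [this] at hlt
    exact lt_irrefl _ hlt
  · obtain ⟨hconj, -, hM'p, hmin⟩ := hM'
    exact hunique' M' hM'p hconj (hmin _ (hdet' _) (hperf _) hconj.symm)
end

section
/- (Asymptotic directions of the NRS-domain.) Assume 0 ≤ a11 < a21, 0 ≤ a12 < a32, 0 ≤ a22 < a32. A nonzero pair of integers (p,q) is an asymptotic direction if and only if either (q = 0 and p < 0) or (q > 0 and a21·p = a11·q); i.e., the asymptotic directions are exactly the positive multiples of (−1,0) and of (a11,a21). -/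
open Polynomial

/-- An NRS-matrix: the characteristic polynomial has one real root and a pair of
non-real complex conjugate roots. -/
def IsNRS (M : M3) : Prop :=
  ∃ (r : ℝ) (z : ℂ), z.im ≠ 0 ∧
    M.charpoly.map (Int.castRingHom ℂ) =
      (X - C (r : ℂ)) * (X - C z) * (X - C ((starRingEnd ℂ) z))

/-- The discriminant of the cubic `x³ - T x² + S x - 1`. -/
def cubicDiscr (T S : ℤ) : ℤ :=
  T ^ 2 * S ^ 2 - 4 * S ^ 3 - 4 * T ^ 3 + 18 * (T * S) - 27

theorem charpoly_Hmat (a11 a12 a13 a21 a22 a23 a32 a33 m n : ℤ)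
    (hdet : (Hmat a11 a12 a13 a21 a22 a23 a32 a33 0 0).det = 1) :
    (Hmat a11 a12 a13 a21 a22 a23 a32 a33 m n).charpoly =
      X ^ 3 - C (a11 + a22 + a33 + a32 * n) * X ^ 2
        + C (a11 * a22 - a12 * a21 + a11 * a33 + a22 * a33 - a32 * a23
          + a32 * (a11 * n - a21 * m)) * X - 1 := by
  have hdet' : (C (Hmat a11 a12 a13 a21 a22 a23 a32 a33 0 0).det : ℤ[X]) = 1 := by
    rw [hdet, C_1]
  simp [Hmat, Matrix.det_fin_three] at hdet'
  simp [Hmat, Matrix.charpoly, Matrix.det_fin_three]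
  linear_combination -hdet'

/-- A real cubic `x³ - T x² + S x - 1` has a real root. -/
theorem exists_real_root_cubic (T S : ℝ) : ∃ r : ℝ, r ^ 3 - T * r ^ 2 + S * r - 1 = 0 := by
  set K : ℝ := 2 + |T| + |S| with hK
  have hT := abs_nonneg T
  have hS := abs_nonneg S
  have hK1 : 1 ≤ K := by linarith
  have hT1 := le_abs_self T
  have hT2 := neg_abs_le T
  have hS1 := le_abs_self S
  have hS2 := neg_abs_le S
  have hsq : K ≤ K ^ 2 := by nlinarith
  have hcube : K ^ 3 = 2 * K ^ 2 + |T| * K ^ 2 + |S| * K ^ 2 := by rw [hK]; ring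
  have hTK1 : T * K ^ 2 ≤ |T| * K ^ 2 := by gcongr
  have hTK2 : -T * K ^ 2 ≤ |T| * K ^ 2 := mul_le_mul_of_nonneg_right (by linarith) (by positivity)
  have hSK1 : -S * K ≤ |S| * K := mul_le_mul_of_nonneg_right (by linarith) (by positivity)
  have hSK2 : |S| * K ≤ |S| * K ^ 2 := by gcongr
  have hcont : ContinuousOn (fun x : ℝ => x ^ 3 - T * x ^ 2 + S * x - 1) (Set.Icc (-K) K) := by
    fun_prop
  obtain ⟨r, -, hr⟩ := intermediate_value_Icc (by linarith : -K ≤ K) hcont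
    (show (0 : ℝ) ∈ _ from ⟨by nlinarith, by nlinarith⟩)
  exact ⟨r, hr⟩

theorem isNRS_iff_cubicDiscr_neg {M : M3} {T S : ℤ}
    (hM : M.charpoly = X ^ 3 - C T * X ^ 2 + C S * X - 1) :
    IsNRS M ↔ cubicDiscr T S < 0 := by
  have hmap : M.charpoly.map (Int.castRingHom ℂ) =
      X ^ 3 - C (T : ℂ) * X ^ 2 + C (S : ℂ) * X - 1 := by
    simp [hM]
  rw [IsNRS, hmap]
  constructor
  · rintro ⟨r, z, hz, h⟩
    have h0 := congrArg (fun f => (f.eval 0).re) h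
    have h1 := congrArg (fun f => (f.eval 1).re) h
    have h2 := congrArg (fun f => (f.eval (-1)).re) h
    simp [show (-1 : ℂ) ^ 3 = -1 by norm_num] at h0 h1 h2
    obtain ⟨x, y⟩ := z
    simp only at h0 h1 h2 hz
    have hT : (T : ℝ) = r + 2 * x := by linarith
    have hS : (S : ℝ) = 2 * x * r + (x ^ 2 + y ^ 2) := by linarith
    have hr : r * (x ^ 2 + y ^ 2) = 1 := by linarith
    have key : ((cubicDiscr T S : ℤ) : ℝ) = -(4 * y ^ 2 * ((r - x) ^ 2 + y ^ 2) ^ 2) := by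
      simp only [cubicDiscr]
      push_cast
      rw [hT, hS]
      linear_combination (27 * (r * (x ^ 2 + y ^ 2)) + 27
        - 18 * ((r + 2 * x) * (2 * x * r + (x ^ 2 + y ^ 2))) + 4 * (r + 2 * x) ^ 3) * hr
    have hy : 0 < y ^ 2 := by positivity
    have hneg : ((cubicDiscr T S : ℤ) : ℝ) < 0 := by
      rw [key, neg_lt_zero]
      positivity
    exact_mod_cast hneg
  · intro h
    obtain ⟨r, hr⟩ := exists_real_root_cubic T S
    have hneg : ((cubicDiscr T S : ℤ) : ℝ) < 0 := by exact_mod_cast h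
    obtain ⟨b, hb⟩ : ∃ b : ℝ, b = r - T := ⟨_, rfl⟩
    obtain ⟨c, hc⟩ : ∃ c : ℝ, c = S + r * b := ⟨_, rfl⟩
    have hT : (T : ℝ) = r - b := by linarith
    have hS : (S : ℝ) = c - r * b := by linarith
    have hrc : r * c = 1 := by rw [hT, hS] at hr; linarith
    have key : ((cubicDiscr T S : ℤ) : ℝ) = (b ^ 2 - 4 * c) * (r ^ 2 + b * r + c) ^ 2 := by
      simp only [cubicDiscr]
      push_cast
      rw [hT, hS]
      linear_combination (27 * (r * c) + 27
        - 18 * ((r - b) * (c - r * b)) + 4 * (r - b) ^ 3) * hrc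
    have hbc : b ^ 2 - 4 * c < 0 := by
      by_contra! hcon
      rw [key] at hneg
      exact absurd hneg (not_lt.mpr (by positivity))
    have hs : Real.sqrt (4 * c - b ^ 2) ^ 2 = 4 * c - b ^ 2 := Real.sq_sqrt (by linarith)
    have hs0 : 0 < Real.sqrt (4 * c - b ^ 2) := Real.sqrt_pos.mpr (by linarith)
    set s := Real.sqrt (4 * c - b ^ 2)
    set z : ℂ := ⟨-b / 2, s / 2⟩ with hz
    have hadd : z + (starRingEnd ℂ) z = ((-b : ℝ) : ℂ) := by
      rw [Complex.add_conj, hz]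
      congr 1
      ring
    have hmul : z * (starRingEnd ℂ) z = (c : ℂ) := by
      rw [Complex.mul_conj, hz, Complex.normSq_mk]
      congr 1
      linear_combination hs / 4
    refine ⟨r, z, (by positivity : s / 2 ≠ 0), ?_⟩
    have hTC : (T : ℂ) = r - b := by exact_mod_cast congrArg (fun u : ℝ => (u : ℂ)) hT
    have hSC : (S : ℂ) = c - r * b := by exact_mod_cast congrArg (fun u : ℝ => (u : ℂ)) hS
    have hrcC : (C (r : ℂ) * C (c : ℂ) : ℂ[X]) = 1 := by
      rw [← C_mul, ← Complex.ofReal_mul, hrc]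
      simp
    have haddC := congrArg (C : ℂ →+* ℂ[X]) hadd
    have hmulC := congrArg (C : ℂ →+* ℂ[X]) hmul
    simp only [map_add, map_mul, Complex.ofReal_neg, map_neg] at haddC hmulC
    rw [hTC, hSC]
    simp only [map_sub, map_mul]
    linear_combination (X - C (r : ℂ)) * X * haddC - (X - C (r : ℂ)) * hmulC + hrcC

/-- An integer quartic with positive leading coefficient is eventually positive. -/
theorem exists_forall_quartic_pos {a : ℤ} (ha : 0 < a) (b c d e : ℤ) :
    ∃ K : ℤ, 1 ≤ K ∧ ∀ t : ℤ, K ≤ t → 0 < a * t ^ 4 + b * t ^ 3 + c * t ^ 2 + d * t + e := by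
  have hb := abs_nonneg b
  have hc := abs_nonneg c
  have hd := abs_nonneg d
  have he := abs_nonneg e
  refine ⟨1 + |b| + |c| + |d| + |e|, by linarith, fun t ht => ?_⟩
  have ht1 : 1 ≤ t := by linarith
  have ht3 : (1 : ℤ) ≤ t ^ 3 := one_le_pow₀ ht1
  have hlead : t ^ 4 ≤ a * t ^ 4 := le_mul_of_one_le_left (by positivity) (by omega)
  have hpow : (1 + |b| + |c| + |d| + |e|) * t ^ 3 ≤ t ^ 4 := by
    rw [pow_succ' t 3]
    gcongr
  have hbt : -b * t ^ 3 ≤ |b| * t ^ 3 := mul_le_mul_of_nonneg_right (neg_le_abs b) (by positivity)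
  have hct : -c * t ^ 2 ≤ |c| * t ^ 3 :=
    mul_le_mul (neg_le_abs c) (pow_le_pow_right₀ ht1 (by norm_num)) (by positivity) hc
  have hdt : -d * t ≤ |d| * t ^ 3 :=
    mul_le_mul (neg_le_abs d) (le_self_pow₀ ht1 (by norm_num)) (by positivity) hd
  have het : -e * 1 ≤ |e| * t ^ 3 := mul_le_mul (neg_le_abs e) ht3 (by positivity) he
  linarith

/-- An integer cubic with positive leading coefficient is eventually positive. -/
theorem exists_forall_cubic_pos {a : ℤ} (ha : 0 < a) (b c d : ℤ) :
    ∃ K : ℤ, 1 ≤ K ∧ ∀ t : ℤ, K ≤ t → 0 < a * t ^ 3 + b * t ^ 2 + c * t + d := by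
  obtain ⟨K, hK, h⟩ := exists_forall_quartic_pos ha b c d 0
  refine ⟨K, hK, fun t ht => ?_⟩
  have hpos := h t ht
  refine pos_of_mul_pos_right (a := t) ?_ (by linarith)
  linarith

theorem cubicDiscr_comm (T S : ℤ) : cubicDiscr T S = cubicDiscr S T := by
  unfold cubicDiscr
  ring

theorem exists_cubicDiscr_pos_of_mul_ne_zero (T S : ℤ) {u v : ℤ} (hu : u ≠ 0) (hv : v ≠ 0) :
    ∃ t : ℤ, 0 ≤ t ∧ 0 < cubicDiscr (T + u * t) (S + v * t) := by
  obtain ⟨K, hK, h⟩ := exists_forall_quartic_pos (a := u ^ 2 * v ^ 2) (by positivity)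
    (2 * u * T * v ^ 2 + 2 * u ^ 2 * v * S - 4 * v ^ 3 - 4 * u ^ 3)
    (u ^ 2 * S ^ 2 + v ^ 2 * T ^ 2 + 4 * u * v * T * S - 12 * v ^ 2 * S - 12 * u ^ 2 * T
      + 18 * u * v)
    (2 * u * T * S ^ 2 + 2 * v * S * T ^ 2 - 12 * v * S ^ 2 - 12 * u * T ^ 2
      + 18 * (u * S + v * T))
    (cubicDiscr T S)
  refine ⟨K, by linarith, (h K le_rfl).trans_eq ?_⟩
  unfold cubicDiscr
  ring

theorem exists_cubicDiscr_pos_of_neg (T S : ℤ) {u : ℤ} (hu : u < 0) :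
    ∃ t : ℤ, 0 ≤ t ∧ 0 < cubicDiscr (T + u * t) S := by
  obtain ⟨K, hK, h⟩ := exists_forall_cubic_pos (a := (-u) ^ 3 * 4)
    (by have : 0 < -u := by linarith
        positivity)
    (u ^ 2 * S ^ 2 - 12 * u ^ 2 * T) (2 * u * T * S ^ 2 - 12 * u * T ^ 2 + 18 * (u * S))
    (cubicDiscr T S)
  refine ⟨K, by linarith, (h K le_rfl).trans_eq ?_⟩
  unfold cubicDiscr
  ring

theorem exists_forall_cubicDiscr_neg_of_pos (T S : ℤ) {u : ℤ} (hu : 0 < u) :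
    ∃ K : ℤ, ∀ t : ℤ, K ≤ t → cubicDiscr (T + u * t) S < 0 := by
  obtain ⟨K, -, h⟩ := exists_forall_cubic_pos (a := u ^ 3 * 4) (by positivity)
    (-(u ^ 2 * S ^ 2 - 12 * u ^ 2 * T)) (-(2 * u * T * S ^ 2 - 12 * u * T ^ 2 + 18 * (u * S)))
    (-cubicDiscr T S)
  refine ⟨K, fun t ht => neg_pos.mp ((h t ht).trans_eq ?_)⟩
  unfold cubicDiscr
  ring

/-- If the discriminant is negative along a ray in direction `(u, v)`, then `(u, v)` lies on one of
the two positive coordinate half-axes. -/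
theorem cubicDiscr_neg_on_ray (T S : ℤ) {u v : ℤ} (huv : ¬(u = 0 ∧ v = 0))
    (h : ∀ t : ℤ, 0 ≤ t → cubicDiscr (T + u * t) (S + v * t) < 0) :
    (u = 0 ∧ 0 < v) ∨ (0 < u ∧ v = 0) := by
  by_contra hcon
  obtain ⟨t, ht, hpos⟩ : ∃ t : ℤ, 0 ≤ t ∧ 0 < cubicDiscr (T + u * t) (S + v * t) := by
    by_cases hu : u = 0
    · obtain ⟨t, ht, hpos⟩ := exists_cubicDiscr_pos_of_neg S T (show v < 0 by omega)
      exact ⟨t, ht, by rwa [cubicDiscr_comm, hu, zero_mul, add_zero]⟩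
    · by_cases hv : v = 0
      · obtain ⟨t, ht, hpos⟩ := exists_cubicDiscr_pos_of_neg T S (show u < 0 by omega)
        exact ⟨t, ht, by rwa [hv, zero_mul, add_zero]⟩
      · exact exists_cubicDiscr_pos_of_mul_ne_zero T S hu hv
  exact lt_asymm hpos (h t ht)

/-- The asymptotic directions of the NRS-domain of the family H(m,n) are exactly
the positive multiples of (−1,0) and of (a11,a21). -/
theorem asymptotic_directions_of_NRS_domain
    (a11 a12 a13 a21 a22 a23 a32 a33 : ℤ)
    (hdet : (Hmat a11 a12 a13 a21 a22 a23 a32 a33 0 0).det = 1)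
    (h11 : 0 ≤ a11) (h1121 : a11 < a21)
    (h12 : 0 ≤ a12) (h1232 : a12 < a32)
    (h22 : 0 ≤ a22) (h2232 : a22 < a32)
    (p q : ℤ) (hpq : ¬(p = 0 ∧ q = 0)) :
    (∃ m n : ℤ, ∀ t : ℤ, 0 ≤ t →
        IsNRS (Hmat a11 a12 a13 a21 a22 a23 a32 a33 (m + p * t) (n + q * t))) ↔
      ((q = 0 ∧ p < 0) ∨ (0 < q ∧ a21 * p = a11 * q)) := by
  have h32 : 0 < a32 := by linarith
  have h21 : 0 < a21 := by linarith
  obtain ⟨T, hT⟩ : ∃ T, T = a11 + a22 + a33 := ⟨_, rfl⟩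
  obtain ⟨S, hS⟩ : ∃ S, S = a11 * a22 - a12 * a21 + a11 * a33 + a22 * a33 - a32 * a23 := ⟨_, rfl⟩
  have hNRS (m n : ℤ) : IsNRS (Hmat a11 a12 a13 a21 a22 a23 a32 a33 m n) ↔
      cubicDiscr (T + a32 * n) (S + a32 * (a11 * n - a21 * m)) < 0 := by
    rw [hT, hS]
    exact isNRS_iff_cubicDiscr_neg (charpoly_Hmat a11 a12 a13 a21 a22 a23 a32 a33 m n hdet)
  simp only [hNRS]
  constructor
  · rintro ⟨m, n, h⟩
    have hray := cubicDiscr_neg_on_ray (T + a32 * n) (S + a32 * (a11 * n - a21 * m))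
      (u := a32 * q) (v := a32 * (a11 * q - a21 * p)) ?_ ?_
    · rcases hray with ⟨hu, hv⟩ | ⟨hu, hv⟩
      · have hq : q = 0 := by simpa [h32.ne'] using hu
        subst hq
        have hp : 0 < a11 * 0 - a21 * p := pos_of_mul_pos_right hv h32.le
        exact Or.inl ⟨rfl, by nlinarith⟩
      · have hp : a11 * q - a21 * p = 0 := by simpa [h32.ne'] using hv
        exact Or.inr ⟨pos_of_mul_pos_right hu h32.le, by linarith⟩
    · rintro ⟨hu, hv⟩
      have hq : q = 0 := by simpa [h32.ne'] using hu
      have hp : p = 0 := by simpa [h32.ne', hq, h21.ne'] using hv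
      exact hpq ⟨hp, hq⟩
    · intro t ht
      convert h t ht using 2 <;> ring
  · rintro (⟨rfl, hp⟩ | ⟨hq, hpq'⟩)
    · obtain ⟨K, hK⟩ := exists_forall_cubicDiscr_neg_of_pos S T
        (u := a32 * (a21 * -p)) (mul_pos h32 (mul_pos h21 (by linarith)))
      refine ⟨p * K, 0, fun t ht => ?_⟩
      rw [cubicDiscr_comm]
      convert hK (K + t) (by linarith) using 2 <;> ring
    · obtain ⟨K, hK⟩ := exists_forall_cubicDiscr_neg_of_pos T S (u := a32 * q) (mul_pos h32 hq)
      refine ⟨p * K, q * K, fun t ht => ?_⟩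
      convert hK (K + t) (by linarith) using 2
      · ring
      · linear_combination -(a32 * (K + t)) * hpq'
end

section
/- Let δ(m,n) = (m² − 4n)·(n² + 4m) − 2mn − 27. For all real numbers m, n with δ(m,n) = 0, one has (m² − 4n + 3)·(n² + 4m + 3) ≥ 0 and (m² − 4n − 3)·(n² + 4m − 3) − 72 ≤ 0. -/
/-- The zero set of δ(m,n) = (m² − 4n)(n² + 4m) − 2mn − 27 lies between the two
shifted pairs of parabolas. -/
theorem discriminant_curve_between_parabolas (m n : ℝ)
    (h : (m ^ 2 - 4 * n) * (n ^ 2 + 4 * m) - 2 * m * n - 27 = 0) :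
    (m ^ 2 - 4 * n + 3) * (n ^ 2 + 4 * m + 3) ≥ 0 ∧
    (m ^ 2 - 4 * n - 3) * (n ^ 2 + 4 * m - 3) - 72 ≤ 0 := by
  constructor
  · linear_combination 2 * sq_nonneg (m + n) + sq_nonneg (m - n + 6) - h
  · linear_combination sq_nonneg (m + n) + 2 * sq_nonneg (m - n + 3) + h
end

section
/- Assume the matrix H0 = [[a11,a12,a13],[a21,a22,a23],[0,a32,a33]] has determinant 1. Let X = [[a21·a32, −a32·a11, a11·a22 − a21·a12], [0, a32, −a11 − a22], [0, 0, 1]]. Then for all integers m, n the matrix identity X·H(m,n) = H'(M',N')·X holds, where H'(M',N') = [[0,0,1],[1,0,M'],[0,1,N']] with M' = a23·a32 − a11·a33 + a12·a21 − a22·a33 − a11·a22 + a21·a32·m − a11·a32·n and N' = a11 + a22 + a33 + a32·n. In particular, if a21 ≠ 0 and a32 ≠ 0 then H(m,n) is conjugate over ℚ to H'(M',N'). -/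
/-- An intertwining relation `X * A = B * X` over `ℤ` with `X` nonsingular makes `A` and `B`
conjugate over `ℚ`. -/
theorem exists_rat_conj_of_intertwine {ι : Type*} [Fintype ι] [DecidableEq ι]
    {X A B : Matrix ι ι ℤ} (hX : X.det ≠ 0) (h : X * A = B * X) :
    ∃ Y : Matrix ι ι ℚ, IsUnit Y.det ∧
      B.map (Int.cast : ℤ → ℚ) = Y * A.map (Int.cast : ℤ → ℚ) * Y⁻¹ := by
  have hY : IsUnit (X.map (Int.cast : ℤ → ℚ)).det := by
    have hcast : (X.map (Int.cast : ℤ → ℚ)).det = (X.det : ℚ) :=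
      ((Int.castRingHom ℚ).map_det X).symm
    rw [hcast, isUnit_iff_ne_zero]
    exact_mod_cast hX
  refine ⟨X.map (Int.cast : ℤ → ℚ), hY, ?_⟩
  have hmap : X.map (Int.cast : ℤ → ℚ) * A.map Int.cast = B.map Int.cast * X.map Int.cast := by
    have := congrArg (Int.castRingHom ℚ).mapMatrix h
    rwa [map_mul, map_mul] at this
  rw [hmap, Matrix.mul_nonsing_inv_cancel_right _ _ hY]

/-- Conjugation of H(m,n) to a matrix of Hessenberg type ⟨0,1|0,0,1⟩: the matrix
identity X·H(m,n) = H'(M',N')·X, and the resulting ℚ-conjugacy when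
a21 ≠ 0 and a32 ≠ 0. -/
theorem conjugation_to_type_0_1_0_0_1
    (a11 a12 a13 a21 a22 a23 a32 a33 : ℤ)
    (hdet : (Hmat a11 a12 a13 a21 a22 a23 a32 a33 0 0).det = 1)
    (m n : ℤ) :
    (!![a21 * a32, -(a32 * a11), a11 * a22 - a21 * a12;
        0,         a32,          -a11 - a22;
        0,         0,            1] : M3) *
      Hmat a11 a12 a13 a21 a22 a23 a32 a33 m n =
    (!![0, 0, 1;
        1, 0, a23 * a32 - a11 * a33 + a12 * a21 - a22 * a33 - a11 * a22
                + a21 * a32 * m - a11 * a32 * n;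
        0, 1, a11 + a22 + a33 + a32 * n] : M3) *
      !![a21 * a32, -(a32 * a11), a11 * a22 - a21 * a12;
         0,         a32,          -a11 - a22;
         0,         0,            1] ∧
    (a21 ≠ 0 → a32 ≠ 0 →
      ∃ Y : Matrix (Fin 3) (Fin 3) ℚ, IsUnit Y.det ∧
        (!![0, 0, 1;
            1, 0, ((a23 * a32 - a11 * a33 + a12 * a21 - a22 * a33 - a11 * a22
                    + a21 * a32 * m - a11 * a32 * n : ℤ) : ℚ);
            0, 1, ((a11 + a22 + a33 + a32 * n : ℤ) : ℚ)] : Matrix (Fin 3) (Fin 3) ℚ) =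
          Y * (Hmat a11 a12 a13 a21 a22 a23 a32 a33 m n).map (Int.cast : ℤ → ℚ) * Y⁻¹) := by
  refine (and_iff_left_of_imp fun h h21 h32 => ?_).mpr ?_
  · obtain ⟨Y, hY, hB⟩ := exists_rat_conj_of_intertwine
      (by simp [Matrix.det_fin_three, h21, h32]) h
    refine ⟨Y, hY, ?_⟩
    rw [← hB]
    ext i j
    fin_cases i <;> fin_cases j <;> simp
  · simp [Hmat, Matrix.det_fin_three] at hdet
    ext i j
    fin_cases i <;> fin_cases j <;> simp [Hmat, Matrix.mul_apply, Fin.sum_univ_three] <;>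
      first | ring1 | linear_combination hdet
end

section
/- Assume a21 ≠ 0, a32 ≠ 0, and that H0 = [[a11,a12,a13],[a21,a22,a23],[0,a32,a33]] has determinant 1. Then for all real m, n: δ(m,n) = δ0(a21·a32·m − a11·a32·n + c1, a32·n + c2), where c1 = a23·a32 − a11·a33 + a12·a21 − a22·a33 − a11·a22, c2 = a11 + a22 + a33, and δ0(M,N) = (M² − 4N)·(N² + 4M) − 2MN − 27. In particular, the affine map (m,n) ↦ (a21·a32·m − a11·a32·n + c1, a32·n + c2) takes the curve δ(m,n) = 0 to the curve δ0 = 0. -/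
open Polynomial

/-- The family H(m,n) of Hessenberg type ⟨a11,a21|a12,a22,a32⟩, over ℝ. -/
noncomputable def HmatR (a11 a12 a13 a21 a22 a23 a32 a33 : ℤ) (m n : ℝ) :
    Matrix (Fin 3) (Fin 3) ℝ :=
  !![(a11 : ℝ), (a12 : ℝ), a11 * m + a12 * n + a13;
     (a21 : ℝ), (a22 : ℝ), a21 * m + a22 * n + a23;
     0,         (a32 : ℝ), a32 * n + a33]

/-- δ0(M,N) = (M² − 4N)(N² + 4M) − 2MN − 27, the discriminant of the
characteristic polynomial of [[0,0,1],[1,0,M],[0,1,N]]. -/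
def delta0 (M N : ℝ) : ℝ := (M ^ 2 - 4 * N) * (N ^ 2 + 4 * M) - 2 * M * N - 27

/-- The characteristic polynomial of a `3 × 3` matrix, evaluated at a point. -/
theorem eval_charpoly_fin_three {R : Type*} [CommRing R] (A : Matrix (Fin 3) (Fin 3) R) (x : R) :
    A.charpoly.eval x = x ^ 3 - A.trace * x ^ 2 +
      (A 0 0 * A 1 1 - A 0 1 * A 1 0 + A 0 0 * A 2 2 - A 0 2 * A 2 0 +
        A 1 1 * A 2 2 - A 1 2 * A 2 1) * x - A.det := by
  rw [Matrix.eval_charpoly, Matrix.det_fin_three, Matrix.det_fin_three, Matrix.trace_fin_three]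
  simp
  ring

/-- Vieta's formulas for a monic cubic, extracted from its values at `0`, `1` and `-1`. -/
theorem vieta_of_eval_cubic {K : Type*} [Field K] [CharZero K] {e₁ e₂ e₃ r1 r2 r3 : K}
    (h : ∀ x ∈ ({0, 1, -1} : Set K),
      x ^ 3 - e₁ * x ^ 2 + e₂ * x - e₃ = (x - r1) * (x - r2) * (x - r3)) :
    e₁ = r1 + r2 + r3 ∧ e₂ = r1 * r2 + r1 * r3 + r2 * r3 ∧ e₃ = r1 * r2 * r3 := by
  have h0 := h 0 (by simp)
  have h1 := h 1 (by simp)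
  have h2 := h (-1) (by simp)
  refine ⟨?_, ?_, ?_⟩
  · linear_combination h0 - h1 / 2 - h2 / 2
  · linear_combination h1 / 2 - h2 / 2
  · linear_combination -h0

/-- The determinant of `H(m,n)` does not depend on `m` and `n`. -/
theorem det_HmatR (a11 a12 a13 a21 a22 a23 a32 a33 : ℤ) (m n : ℝ) :
    (HmatR a11 a12 a13 a21 a22 a23 a32 a33 m n).det =
      (HmatR a11 a12 a13 a21 a22 a23 a32 a33 0 0).det := by
  simp [HmatR, Matrix.det_fin_three]
  ring

/-- `H(m,n)` has the characteristic polynomial `x³ - N x² - M x - det H(0,0)`. -/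
theorem eval_charpoly_HmatR (a11 a12 a13 a21 a22 a23 a32 a33 : ℤ) (m n x : ℝ) :
    (HmatR a11 a12 a13 a21 a22 a23 a32 a33 m n).charpoly.eval x =
      x ^ 3 - ((a32 : ℝ) * n + (a11 + a22 + a33 : ℤ)) * x ^ 2 +
        -((a21 : ℝ) * a32 * m - a11 * a32 * n +
          (a23 * a32 - a11 * a33 + a12 * a21 - a22 * a33 - a11 * a22 : ℤ)) * x -
        (HmatR a11 a12 a13 a21 a22 a23 a32 a33 0 0).det := by
  rw [eval_charpoly_fin_three, det_HmatR, Matrix.trace_fin_three]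
  simp [HmatR]
  ring

/-- If `x³ - N x² - M x - 1` has roots `r1, r2, r3`, its discriminant is `δ0(M,N)`. -/
theorem discr_eq_delta0 {M N : ℝ} {r1 r2 r3 : ℂ} (hN : (N : ℂ) = r1 + r2 + r3)
    (hM : -(M : ℂ) = r1 * r2 + r1 * r3 + r2 * r3) (h1 : 1 = r1 * r2 * r3) :
    ((r1 - r2) * (r1 - r3) * (r2 - r3)) ^ 2 = (delta0 M N : ℂ) := by
  have hdelta : (delta0 M N : ℂ) = N ^ 2 * M ^ 2 + 4 * M ^ 3 - 4 * N ^ 3 * 1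
      - 18 * N * M * 1 - 27 * 1 ^ 2 := by
    simp only [delta0]
    push_cast
    ring
  rw [hdelta, h1, hN, neg_eq_iff_eq_neg.mp hM]
  ring

/-- The discriminant δ(m,n) of H(m,n) (expressed via the complex roots of its
characteristic polynomial) equals δ0 evaluated at the affine image
(a21·a32·m − a11·a32·n + c1, a32·n + c2). -/
theorem discriminant_affine_transform
    (a11 a12 a13 a21 a22 a23 a32 a33 : ℤ)
    (ha21 : a21 ≠ 0) (ha32 : a32 ≠ 0)
    (hdet : (HmatR a11 a12 a13 a21 a22 a23 a32 a33 0 0).det = 1) :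
    ∀ m n : ℝ, ∀ r1 r2 r3 : ℂ,
      (HmatR a11 a12 a13 a21 a22 a23 a32 a33 m n).charpoly.map (algebraMap ℝ ℂ) =
        (X - C r1) * (X - C r2) * (X - C r3) →
      ((r1 - r2) * (r1 - r3) * (r2 - r3)) ^ 2 =
        ((delta0
            ((a21 : ℝ) * a32 * m - a11 * a32 * n +
              (a23 * a32 - a11 * a33 + a12 * a21 - a22 * a33 - a11 * a22 : ℤ))
            ((a32 : ℝ) * n + (a11 + a22 + a33 : ℤ)) : ℝ) : ℂ) := by
  intro m n r1 r2 r3 h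
  have heval : ∀ x : ℝ, (((HmatR a11 a12 a13 a21 a22 a23 a32 a33 m n).charpoly.eval x : ℝ) : ℂ) =
      (x - r1) * (x - r2) * (x - r3) := by
    intro x
    have hx := congrArg (Polynomial.eval (x : ℂ)) h
    rw [show (x : ℂ) = algebraMap ℝ ℂ x from rfl, eval_map_algebraMap,
      aeval_algebraMap_apply] at hx
    simpa using hx
  simp only [eval_charpoly_HmatR, hdet] at heval
  generalize (a21 : ℝ) * a32 * m - a11 * a32 * n +
    (a23 * a32 - a11 * a33 + a12 * a21 - a22 * a33 - a11 * a22 : ℤ) = M at heval ⊢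
  generalize (a32 : ℝ) * n + (a11 + a22 + a33 : ℤ) = N at heval ⊢
  obtain ⟨hN, hM, h1⟩ := vieta_of_eval_cubic (K := ℂ) (e₁ := N) (e₂ := -M) (e₃ := 1)
    (r1 := r1) (r2 := r2) (r3 := r3) (by
      rintro x (rfl | rfl | rfl)
      · simpa using heval 0
      · simpa using heval 1
      · simpa using heval (-1))
  exact discr_eq_delta0 hN hM h1
end

section
/- Fix integers x, y and let u = (x, y, 0) ∈ ℤ³. Fix integers m, n and for each integer t let A_t = H(m − t, n). Then there exists an integer C (independent of t) such that for every integer t, |det(u, A_t·u, A_t²·u)| = |(a21·x − a11·y)·a32²·y²·t + C|, where det(u, w1, w2) denotes the determinant of the 3×3 matrix with columns u, w1, w2. In particular, the Markoff–Davenport characteristic of A_t at (x,y,0) is linear in t up to absolute value, with slope (a21·x − a11·y)·a32²·y². -/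
/-- Along the ray A_t = H(m − t, n), the Markoff–Davenport characteristic of the
point u = (x, y, 0) is, up to absolute value, a linear function of t with slope
(a21·x − a11·y)·a32²·y². -/
theorem MDchar_linear_along_ray
    (a11 a12 a13 a21 a22 a23 a32 a33 : ℤ)
    (hdet : (Hmat a11 a12 a13 a21 a22 a23 a32 a33 0 0).det = 1)
    (x y m n : ℤ) :
    ∃ C : ℤ, ∀ t : ℤ,
      |(Matrix.of fun i j : Fin 3 =>
          (![(![x, y, 0] : Fin 3 → ℤ),
             (Hmat a11 a12 a13 a21 a22 a23 a32 a33 (m - t) n).mulVec ![x, y, 0],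
             ((Hmat a11 a12 a13 a21 a22 a23 a32 a33 (m - t) n) *
                (Hmat a11 a12 a13 a21 a22 a23 a32 a33 (m - t) n)).mulVec
               ![x, y, 0]] j) i).det| =
        |(a21 * x - a11 * y) * a32 ^ 2 * y ^ 2 * t + C| := by
  refine ⟨(x * (a21 * x + a22 * y) - y * (a11 * x + a12 * y)) *
      (a32 * (a21 * x + a22 * y) + (a32 * n + a33) * (a32 * y)) -
    a32 * y *
      (x * (a21 * (a11 * x + a12 * y) + a22 * (a21 * x + a22 * y) +
          (a21 * m + a22 * n + a23) * (a32 * y)) -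
        y * (a11 * (a11 * x + a12 * y) + a12 * (a21 * x + a22 * y) +
          (a11 * m + a12 * n + a13) * (a32 * y))), fun t => ?_⟩
  congr 1
  rw [← Matrix.mulVec_mulVec, Matrix.det_fin_three]
  simp [Hmat, dotProduct, Fin.sum_univ_three]
  ring
end

section
/- Let m, n be integers such that for every integer t ≥ 0 the matrix A_t = [[0,0,1],[1,0,m−t],[0,1,n]] has one real eigenvalue and two non-real complex conjugate eigenvalues. Then for every ε > 0 there exists C > 0 such that for every integer t > C and every choice of eigenbasis (g1,g2,g3) for A_t, the convex hull of T_{A_t}((1,0,0)) ∪ T_{A_t}((0,1,0)) is contained in the ε-tubular neighborhood of the convex hull of the three points (1,0,0), (0,1,0), (0,−1,0). -/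
open Polynomial

/-- A real 3×3 matrix has NRS-spectrum if its characteristic polynomial has one
real root and a pair of non-real complex conjugate roots. -/
def HasNRSSpectrum (A : Matrix (Fin 3) (Fin 3) ℝ) : Prop :=
  ∃ (r : ℝ) (z : ℂ), z.im ≠ 0 ∧
    A.charpoly.map (algebraMap ℝ ℂ) =
      (X - C (r : ℂ)) * (X - C z) * (X - C ((starRingEnd ℂ) z))

/-- An eigenbasis (g1,g2,g3) for A: g1 is a real eigenvector and g2, g3 are the
real and imaginary parts of a complex eigenvector; the three vectors form a
basis of ℝ³. -/
def IsEigenbasis (A : Matrix (Fin 3) (Fin 3) ℝ) (g1 g2 g3 : Fin 3 → ℝ) : Prop :=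
  g1 ≠ 0 ∧ (∃ r : ℝ, A.mulVec g1 = r • g1) ∧
  (∃ (c : ℂ) (v : Fin 3 → ℂ), v ≠ 0 ∧
      (A.map (Complex.ofReal : ℝ → ℂ)).mulVec v = c • v ∧
      g2 = (fun i => (v i).re) ∧ g3 = (fun i => (v i).im)) ∧
  LinearIndependent ℝ ![g1, g2, g3]

/-- The Klein–Voronoi orbit T_A(v) of a point v = x·g1 + y·g2 + z·g3, written in
the eigenbasis (g1,g2,g3). -/
def KVorbit (g1 g2 g3 v : Fin 3 → ℝ) : Set (Fin 3 → ℝ) :=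
  { p | ∃ x y z θ : ℝ, v = x • g1 + y • g2 + z • g3 ∧
      p = x • g1 + (y * Real.cos θ + z * Real.sin θ) • g2 +
            (-y * Real.sin θ + z * Real.cos θ) • g3 }

/-- Euclidean distance on ℝ³ (as `Fin 3 → ℝ`). -/
noncomputable def euclDist (p q : Fin 3 → ℝ) : ℝ :=
  Real.sqrt (∑ i, (p i - q i) ^ 2)

/-- The ε-tubular neighborhood of a set: points at Euclidean distance < ε from it. -/
def tubNbhd (ε : ℝ) (S : Set (Fin 3 → ℝ)) : Set (Fin 3 → ℝ) :=
  { p | ∃ q ∈ S, euclDist p q < ε }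

/-- The matrix of Hessenberg type ⟨0,1|0,0,1⟩ with last column `(1, M, N)` acts as follows. -/
lemma hessenberg_mulVec {R : Type*} [CommRing R] (M N : R) (v : Fin 3 → R) :
    (!![0, 0, 1; 1, 0, M; 0, 1, N] : Matrix (Fin 3) (Fin 3) R).mulVec v =
      ![v 2, v 0 + M * v 2, v 1 + N * v 2] := by
  ext i
  fin_cases i <;> simp [Matrix.mulVec, dotProduct, Fin.sum_univ_three]

/-- An eigenvector of the Hessenberg matrix is determined by its last coordinate, and its
eigenvalue is a root of the characteristic polynomial. -/
lemma hessenberg_eigenvector {K : Type*} [Field K] {M N c : K} {v : Fin 3 → K} (hv : v ≠ 0)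
    (h : (!![0, 0, 1; 1, 0, M; 0, 1, N] : Matrix (Fin 3) (Fin 3) K).mulVec v = c • v) :
    c ^ 3 = N * c ^ 2 + M * c + 1 ∧ v 1 = (c - N) * v 2 ∧
      v 0 = (c * (c - N) - M) * v 2 := by
  rw [hessenberg_mulVec] at h
  have h0 : v 2 = c * v 0 := by simpa using congrFun h 0
  have h1 : v 0 + M * v 2 = c * v 1 := by simpa using congrFun h 1
  have h2 : v 1 + N * v 2 = c * v 2 := by simpa using congrFun h 2
  have e1 : v 1 = (c - N) * v 2 := by linear_combination h2
  have e0 : v 0 = (c * (c - N) - M) * v 2 := by linear_combination h1 + c * e1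
  refine ⟨?_, e1, e0⟩
  have hne : v 2 ≠ 0 := by
    intro hz
    apply hv
    ext i
    fin_cases i <;> simp [e0, e1, hz]
  apply mul_right_cancel₀ hne
  linear_combination -h0 - c * e0

/-- The values on a Klein–Voronoi orbit of the eigenfunctionals `(1, r, r²)` and `(1, c, c²)`,
`c = a + b i`, of the transposed Hessenberg matrix, together with the Vieta relations for its
eigenvalues `r`, `a ± b i`. -/
lemma exists_eigenvalues_of_isEigenbasis {M N : ℝ} {g1 g2 g3 : Fin 3 → ℝ}
    (h : IsEigenbasis !![0, 0, 1; 1, 0, M; 0, 1, N] g1 g2 g3) :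
    ∃ r a b : ℝ, b ≠ 0 ∧ 2 * a + r = N ∧ a ^ 2 + b ^ 2 + 2 * a * r = -M ∧
      r * (a ^ 2 + b ^ 2) = 1 ∧
      ∀ v, ∀ p ∈ KVorbit g1 g2 g3 v, ∃ θ : ℝ,
        p 0 + r * p 1 + r ^ 2 * p 2 = v 0 + r * v 1 + r ^ 2 * v 2 ∧
        p 0 + a * p 1 + (a ^ 2 - b ^ 2) * p 2 =
          Real.cos θ * (v 0 + a * v 1 + (a ^ 2 - b ^ 2) * v 2) -
            Real.sin θ * (b * v 1 + 2 * a * b * v 2) ∧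
        b * p 1 + 2 * a * b * p 2 =
          Real.sin θ * (v 0 + a * v 1 + (a ^ 2 - b ^ 2) * v 2) +
            Real.cos θ * (b * v 1 + 2 * a * b * v 2) := by
  obtain ⟨hg1, ⟨r, hr⟩, ⟨c, v, hv, hc, hg2, hg3⟩, hli⟩ := h
  have hmap : (!![0, 0, 1; 1, 0, M; 0, 1, N] : Matrix (Fin 3) (Fin 3) ℝ).map
      (Complex.ofReal : ℝ → ℂ) = !![0, 0, 1; 1, 0, (M : ℂ); 0, 1, (N : ℂ)] := by
    ext i j
    fin_cases i <;> fin_cases j <;> simp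
  rw [hmap] at hc
  obtain ⟨hrr, -, -⟩ := hessenberg_eigenvector hg1 hr
  obtain ⟨hcc, hv1, hv0⟩ := hessenberg_eigenvector hv hc
  rw [hessenberg_mulVec] at hr hc
  obtain ⟨a, b⟩ := c
  have hb : b ≠ 0 := by
    rintro rfl
    have key : (v 2).im • g2 - (v 2).re • g3 = 0 := by
      ext i
      fin_cases i <;> simp [hg2, hg3, hv0, hv1] <;> ring
    rw [Fintype.linearIndependent_iff] at hli
    have hcoef := hli ![0, (v 2).im, -(v 2).re] (by
      simpa [Fin.sum_univ_three, sub_eq_add_neg] using key)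
    have him : (v 2).im = 0 := by simpa using hcoef 1
    have hre : (v 2).re = 0 := by simpa using hcoef 2
    have hz : v 2 = 0 := Complex.ext hre him
    apply hv
    ext i
    fin_cases i <;> simp [hv0, hv1, hz]
  have cre := congrArg Complex.re hcc
  have cim := congrArg Complex.im hcc
  simp [pow_succ] at cre cim
  have him : 3 * a ^ 2 - b ^ 2 = 2 * N * a + M := by
    apply mul_right_cancel₀ hb
    linear_combination cim
  have hra : (r - (N - 2 * a)) * ((r - a) ^ 2 + b ^ 2) = 0 := by
    linear_combination hrr - cre - (r - a) * him
  have hD : (r - a) ^ 2 + b ^ 2 ≠ 0 := by positivity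
  have hr' : r = N - 2 * a := by
    have := (mul_eq_zero.1 hra).resolve_right hD
    linarith
  have hs : a ^ 2 + b ^ 2 + 2 * a * r = -M := by rw [hr']; linear_combination -him
  refine ⟨r, a, b, hb, by linarith, hs, by linear_combination r * hs + hrr - r ^ 2 * hr', ?_⟩
  have hc0 := congrFun hc 0
  have hc1 := congrFun hc 1
  have hc2 := congrFun hc 2
  have x0 := congrArg Complex.re hc0
  have y0 := congrArg Complex.im hc0
  have x1 := congrArg Complex.re hc1
  have y1 := congrArg Complex.im hc1
  have x2 := congrArg Complex.re hc2
  have y2 := congrArg Complex.im hc2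
  have z0 : g1 2 = r * g1 0 := by simpa using congrFun hr 0
  have z1 : g1 0 + M * g1 2 = r * g1 1 := by simpa using congrFun hr 1
  have z2 : g1 1 + N * g1 2 = r * g1 2 := by simpa using congrFun hr 2
  simp at x0 x1 x2 y0 y1 y2
  have e2 : ∀ i, (v i).re = g2 i := fun i => by rw [hg2]
  have e3 : ∀ i, (v i).im = g3 i := fun i => by rw [hg3]
  simp only [e2, e3] at x0 x1 x2 y0 y1 y2
  -- the functional `(1, r, r²)` kills the plane spanned by `g2` and `g3`
  have l1 : (g2 0 + r * g2 1 + r ^ 2 * g2 2) * (r - a) = -b * (g3 0 + r * g3 1 + r ^ 2 * g3 2) := by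
    linear_combination x0 + r * x1 + r ^ 2 * x2 + g2 2 * hrr
  have l2 : (g3 0 + r * g3 1 + r ^ 2 * g3 2) * (r - a) = b * (g2 0 + r * g2 1 + r ^ 2 * g2 2) := by
    linear_combination y0 + r * y1 + r ^ 2 * y2 + g3 2 * hrr
  have r2 : g2 0 + r * g2 1 + r ^ 2 * g2 2 = 0 := by
    apply (mul_eq_zero.1 _).resolve_right hD
    linear_combination (r - a) * l1 - b * l2
  have r3 : g3 0 + r * g3 1 + r ^ 2 * g3 2 = 0 := by
    apply (mul_eq_zero.1 _).resolve_right hD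
    linear_combination (r - a) * l2 + b * l1
  -- the functional `(1, c, c²)` kills `g1`
  have f1 : (g1 0 + a * g1 1 + (a ^ 2 - b ^ 2) * g1 2) * (r - a) =
      -b * (b * g1 1 + 2 * a * b * g1 2) := by
    linear_combination -z0 - a * z1 - (a ^ 2 - b ^ 2) * z2 - g1 2 * cre
  have f2 : (b * g1 1 + 2 * a * b * g1 2) * (r - a) =
      b * (g1 0 + a * g1 1 + (a ^ 2 - b ^ 2) * g1 2) := by
    linear_combination -b * z1 - 2 * a * b * z2 - g1 2 * cim
  have F1 : g1 0 + a * g1 1 + (a ^ 2 - b ^ 2) * g1 2 = 0 := by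
    apply (mul_eq_zero.1 _).resolve_right hD
    linear_combination (r - a) * f1 - b * f2
  have G1 : b * g1 1 + 2 * a * b * g1 2 = 0 := by
    apply (mul_eq_zero.1 _).resolve_right hD
    linear_combination (r - a) * f2 + b * f1
  -- `L(g3) = -i L(g2)` for the functional `L = (1, c, c²)`
  have FG : g3 0 + a * g3 1 + (a ^ 2 - b ^ 2) * g3 2 = b * g2 1 + 2 * a * b * g2 2 := by
    apply mul_left_cancel₀ hb
    linear_combination x0 + a * x1 + (a ^ 2 - b ^ 2) * x2 + g2 2 * cre
  have GF : b * g3 1 + 2 * a * b * g3 2 = -(g2 0 + a * g2 1 + (a ^ 2 - b ^ 2) * g2 2) := by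
    apply mul_left_cancel₀ hb
    linear_combination b * x1 + 2 * a * b * x2 + g2 2 * cim
  rintro w p ⟨x, y, z, θ, rfl, rfl⟩
  refine ⟨θ, ?_, ?_, ?_⟩ <;> simp only [Pi.add_apply, Pi.smul_apply, smul_eq_mul]
  · linear_combination (y * Real.cos θ + z * Real.sin θ - y) * r2 +
      (-y * Real.sin θ + z * Real.cos θ - z) * r3
  · linear_combination (x - Real.cos θ * x) * F1 + Real.sin θ * x * G1 -
      y * Real.sin θ * FG + Real.sin θ * z * GF
  · linear_combination (x - Real.cos θ * x) * G1 - Real.sin θ * x * F1 - Real.sin θ * z * FG -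
      y * Real.sin θ * GF

/-- A sup-norm thickening by `ε / 2` lies in the Euclidean `ε`-tubular neighborhood. -/
lemma thickening_subset_tubNbhd {ε : ℝ} (hε : 0 < ε) (S : Set (Fin 3 → ℝ)) :
    Metric.thickening (ε / 2) S ⊆ tubNbhd ε S := by
  intro p hp
  obtain ⟨q, hq, hd⟩ := Metric.mem_thickening_iff.1 hp
  refine ⟨q, hq, ?_⟩
  rw [euclDist, Real.sqrt_lt' hε, Fin.sum_univ_three]
  have hi : ∀ i, (p i - q i) ^ 2 < (ε / 2) ^ 2 := fun i => by
    have := (dist_le_pi_dist p q i).trans_lt hd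
    rw [Real.dist_eq] at this
    exact sq_lt_sq.2 (by rwa [abs_of_pos (half_pos hε)])
  nlinarith [hi 0, hi 1, hi 2]

/-- The third coordinate of a point with prescribed values `ρ`, `P + b Q i` of the
eigenfunctionals `(1, r, r²)` and `(1, c, c²)`, `c = a + b i`. -/
lemma abs_mul_sq_le_of_eigenfunctionals {r a b K x y z ρ P Q : ℝ} (har : |a - r| ≤ K)
    (h1 : x + r * y + r ^ 2 * z = ρ) (h2 : x + a * y + (a ^ 2 - b ^ 2) * z = P)
    (h3 : y + 2 * a * z = Q) : |z| * |b| ^ 2 ≤ |ρ - P| + K * |Q| := by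
  have hz : z * ((a - r) ^ 2 + b ^ 2) = (ρ - P) + (a - r) * Q := by
    linear_combination h1 - h2 + (a - r) * h3
  calc |z| * |b| ^ 2 ≤ |z| * ((a - r) ^ 2 + b ^ 2) := by
        rw [sq_abs]
        exact mul_le_mul_of_nonneg_left (by nlinarith [sq_nonneg (a - r)]) (abs_nonneg z)
    _ = |(ρ - P) + (a - r) * Q| := by
        rw [← hz, abs_mul, abs_of_nonneg (by positivity : 0 ≤ (a - r) ^ 2 + b ^ 2)]
    _ ≤ |ρ - P| + |a - r| * |Q| := by
        rw [← abs_mul]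
        exact abs_add_le _ _
    _ ≤ |ρ - P| + K * |Q| := by gcongr

lemma real_eigenvalue_bounds {r a b : ℝ} (hb : 1 ≤ |b|) (hP : r * (a ^ 2 + b ^ 2) = 1) :
    0 ≤ r ∧ r ≤ 1 ∧ r * |b| ≤ 1 := by
  have hb2 : |b| ^ 2 = b ^ 2 := sq_abs b
  have hr : 0 < r := by
    by_contra! h
    nlinarith [mul_nonneg (neg_nonneg.2 h) (by positivity : 0 ≤ a ^ 2 + b ^ 2)]
  have hrb : r * |b| ≤ 1 := by
    nlinarith [mul_nonneg hr.le (sq_nonneg a), mul_pos hr (by linarith : 0 < |b|)]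
  exact ⟨hr.le, by nlinarith, hrb⟩

/-- The orbit of `(1,0,0)` is `O(1/b)`-close to `(1,0,0)`. -/
lemma orbit_e1_bound {r a b K x y z s c : ℝ} (hb : 1 ≤ |b|) (hP : r * (a ^ 2 + b ^ 2) = 1)
    (ha : |a| ≤ K) (har : |a - r| ≤ K) (hs : |s| ≤ 1) (hc : |c| ≤ 1)
    (h1 : x + r * y + r ^ 2 * z = 1)
    (h2 : x + a * y + (a ^ 2 - b ^ 2) * z = c) (h3 : b * y + 2 * a * b * z = s) :
    |x - 1| ≤ 10 * (K + 2) ^ 3 / |b| ∧ |y| ≤ 10 * (K + 2) ^ 3 / |b| ∧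
      |z| ≤ 10 * (K + 2) ^ 3 / |b| := by
  have hb0 : 0 < |b| := by linarith
  have hK : 0 ≤ K := (abs_nonneg a).trans ha
  obtain ⟨hr0, hr1, hrb⟩ := real_eigenvalue_bounds hb hP
  have hbQ : |y + 2 * a * z| * |b| ≤ 1 := by
    rwa [← abs_mul, show (y + 2 * a * z) * b = s by linear_combination h3]
  have hQ : |y + 2 * a * z| ≤ 1 := by nlinarith [abs_nonneg (y + 2 * a * z)]
  have hz2 := abs_mul_sq_le_of_eigenfunctionals har h1 h2 rfl
  have hc' : |1 - c| ≤ 2 := by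
    have := abs_sub (1 : ℝ) c
    rw [abs_one] at this
    linarith
  have hz : |z| * |b| ≤ 2 + K := by nlinarith [mul_nonneg (abs_nonneg z) hb0.le]
  have hy : |y| * |b| ≤ 1 + 2 * K * (2 + K) := by
    have : |y| ≤ |y + 2 * a * z| + 2 * K * |z| := by
      calc |y| = |(y + 2 * a * z) - 2 * a * z| := by ring_nf
        _ ≤ |y + 2 * a * z| + |2 * a * z| := abs_sub _ _
        _ = |y + 2 * a * z| + 2 * |a| * |z| := by rw [abs_mul, abs_mul, abs_two]
        _ ≤ _ := by gcongr
    nlinarith [mul_le_mul_of_nonneg_right this hb0.le, mul_le_mul_of_nonneg_left hz hK]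
  have hx : |x - 1| * |b| ≤ |y| + |z| := by
    calc |x - 1| * |b| = |r * y + r ^ 2 * z| * |b| := by
          rw [← abs_neg (x - 1), show -(x - 1) = r * y + r ^ 2 * z by linear_combination -h1]
      _ ≤ (r * |y| + r ^ 2 * |z|) * |b| := by
          gcongr
          refine (abs_add_le _ _).trans_eq ?_
          rw [abs_mul, abs_mul, abs_of_nonneg hr0, abs_of_nonneg (sq_nonneg r)]
      _ = (r * |b|) * (|y| + r * |z|) := by ring
      _ ≤ 1 * (|y| + 1 * |z|) := by gcongr
      _ = _ := by ring
  have hyb : |y| ≤ |y| * |b| := le_mul_of_one_le_right (abs_nonneg y) hb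
  have hzb : |z| ≤ |z| * |b| := le_mul_of_one_le_right (abs_nonneg z) hb
  have hK2 : 0 ≤ K ^ 2 := sq_nonneg K
  have hK3 : 0 ≤ K ^ 3 := by positivity
  refine ⟨?_, ?_, ?_⟩ <;> rw [le_div_iff₀ hb0] <;> linarith

/-- The orbit of `(0,1,0)` is `O(1/b)`-close to the segment from `(0,-1,0)` to `(0,1,0)`. -/
lemma orbit_e2_bound {r a b K x y z s c : ℝ} (hb : 1 ≤ |b|) (hP : r * (a ^ 2 + b ^ 2) = 1)
    (ha : |a| ≤ K) (har : |a - r| ≤ K) (hs : |s| ≤ 1) (hc : |c| ≤ 1)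
    (h1 : x + r * y + r ^ 2 * z = r)
    (h2 : x + a * y + (a ^ 2 - b ^ 2) * z = c * a - s * b)
    (h3 : b * y + 2 * a * b * z = s * a + c * b) :
    |x| ≤ 10 * (K + 2) ^ 3 / |b| ∧ |y - c| ≤ 10 * (K + 2) ^ 3 / |b| ∧
      |z| ≤ 10 * (K + 2) ^ 3 / |b| := by
  have hb0 : 0 < |b| := by linarith
  have hK : 0 ≤ K := (abs_nonneg a).trans ha
  obtain ⟨hr0, hr1, hrb⟩ := real_eigenvalue_bounds hb hP
  have hsa : |s| * |a| ≤ K := by nlinarith [abs_nonneg s, abs_nonneg a]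
  have hca : |c| * |a| ≤ K := by nlinarith [abs_nonneg c, abs_nonneg a]
  have hsb : |s| * |b| ≤ |b| := by nlinarith
  have hbQ : |y + 2 * a * z - c| * |b| ≤ K := by
    rwa [← abs_mul, show (y + 2 * a * z - c) * b = s * a by linear_combination h3, abs_mul]
  have hQ : |y + 2 * a * z| ≤ K + 1 := by
    have := abs_add_le (y + 2 * a * z - c) c
    rw [sub_add_cancel] at this
    nlinarith [abs_nonneg (y + 2 * a * z - c)]
  have hz2 := abs_mul_sq_le_of_eigenfunctionals har h1 h2 rfl
  have hρ : |r - (c * a - s * b)| ≤ 1 + K + |b| := by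
    have t1 := abs_sub r (c * a - s * b)
    have t2 := abs_sub (c * a) (s * b)
    rw [abs_mul, abs_mul] at t2
    rw [abs_of_nonneg hr0] at t1
    linarith
  have hz : |z| * |b| ≤ K ^ 2 + 2 * K + 2 := by
    apply le_of_mul_le_mul_right _ hb0
    nlinarith [mul_le_mul_of_nonneg_left hQ hK, mul_nonneg hK (sub_nonneg.2 hb),
      mul_nonneg (sq_nonneg K) (sub_nonneg.2 hb)]
  have hy : |y - c| * |b| ≤ K + 2 * K * (K ^ 2 + 2 * K + 2) := by
    have : |y - c| ≤ |y + 2 * a * z - c| + 2 * K * |z| := by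
      calc |y - c| = |(y + 2 * a * z - c) - 2 * a * z| := by ring_nf
        _ ≤ |y + 2 * a * z - c| + |2 * a * z| := abs_sub _ _
        _ = |y + 2 * a * z - c| + 2 * |a| * |z| := by rw [abs_mul, abs_mul, abs_two]
        _ ≤ _ := by gcongr
    nlinarith [mul_le_mul_of_nonneg_right this hb0.le, mul_le_mul_of_nonneg_left hz hK]
  have hx : |x| * |b| ≤ |1 - y| + |z| := by
    calc |x| * |b| = |r * (1 - y) - r ^ 2 * z| * |b| := by
          rw [show x = r * (1 - y) - r ^ 2 * z by linear_combination h1]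
      _ ≤ (r * |1 - y| + r ^ 2 * |z|) * |b| := by
          gcongr
          refine (abs_sub _ _).trans_eq ?_
          rw [abs_mul, abs_mul, abs_of_nonneg hr0, abs_of_nonneg (sq_nonneg r)]
      _ = (r * |b|) * (|1 - y| + r * |z|) := by ring
      _ ≤ 1 * (|1 - y| + 1 * |z|) := by gcongr
      _ = _ := by ring
  have hy1 : |1 - y| ≤ 2 + |y - c| := by
    have t1 := abs_sub (1 - c) (y - c)
    have t2 := abs_sub (1 : ℝ) c
    rw [sub_sub_sub_cancel_right] at t1
    rw [abs_one] at t2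
    linarith
  have hyb : |y - c| ≤ |y - c| * |b| := le_mul_of_one_le_right (abs_nonneg _) hb
  have hzb : |z| ≤ |z| * |b| := le_mul_of_one_le_right (abs_nonneg z) hb
  have hK2 : 0 ≤ K ^ 2 := sq_nonneg K
  have hK3 : 0 ≤ K ^ 3 := by positivity
  refine ⟨?_, ?_, ?_⟩ <;> rw [le_div_iff₀ hb0] <;> linarith

/-- For large `-M` the imaginary part `b` of the complex eigenvalues is large, while the real
part stays bounded. -/
lemma eigenvalue_bounds {M N r a b B : ℝ} (hN : 2 * a + r = N)
    (hM : a ^ 2 + b ^ 2 + 2 * a * r = -M) (hP : r * (a ^ 2 + b ^ 2) = 1) (hB : 0 ≤ B)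
    (hlarge : N ^ 2 + 1 + B ^ 2 + 3 * (|N| + 3) ^ 2 ≤ -M) :
    |a| ≤ |N| + 3 ∧ |a - r| ≤ |N| + 3 ∧ B ≤ |b| := by
  have hr : 0 < r := by
    by_contra! h
    nlinarith [mul_nonneg (neg_nonneg.2 h) (by positivity : 0 ≤ a ^ 2 + b ^ 2)]
  have hr1 : r ≤ 1 := by
    have hroot : r * (r ^ 2 - N * r - M) = 1 := by
      subst hN
      linear_combination hP - r * hM
    have hq : 1 ≤ r ^ 2 - N * r - M := by
      nlinarith [sq_nonneg (2 * r - N), sq_nonneg B, sq_nonneg (|N| + 3), sq_nonneg N]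
    nlinarith
  have hn1 := neg_abs_le N
  have hn2 := le_abs_self N
  have ha : |a| ≤ |N| + 3 := abs_le.2 ⟨by linarith, by linarith⟩
  refine ⟨ha, abs_le.2 ⟨by linarith, by linarith⟩, ?_⟩
  have hsq : B ^ 2 ≤ b ^ 2 := by
    have ha2 : a ^ 2 ≤ (|N| + 3) ^ 2 := sq_le_sq.2 (ha.trans (le_abs_self _))
    have har : a * r ≤ |N| + 3 := by
      nlinarith [mul_le_mul_of_nonneg_right (le_abs_self a) hr.le, abs_nonneg a]
    nlinarith [abs_nonneg N, sq_nonneg N]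
  simpa [abs_of_nonneg hB] using sq_le_sq.1 hsq

/-- For NRS-rays of Hessenberg type ⟨0,1|0,0,1⟩ in the direction (−1,0): the
convex hull of the orbits of (1,0,0) and (0,1,0) eventually lies in the
ε-tubular neighborhood of the triangle (1,0,0), (0,1,0), (0,−1,0). -/
theorem orbit_hull_flattens_type_0_1_0_0_1_dir_neg (m n : ℤ)
    (hray : ∀ t : ℤ, 0 ≤ t →
      HasNRSSpectrum !![(0 : ℝ), 0, 1; 1, 0, (m : ℝ) - t; 0, 1, (n : ℝ)]) :
    ∀ ε : ℝ, 0 < ε → ∃ C : ℝ, 0 < C ∧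
      ∀ t : ℤ, C < (t : ℝ) →
        ∀ g1 g2 g3 : Fin 3 → ℝ,
          IsEigenbasis !![(0 : ℝ), 0, 1; 1, 0, (m : ℝ) - t; 0, 1, (n : ℝ)] g1 g2 g3 →
          convexHull ℝ
              (KVorbit g1 g2 g3 ![1, 0, 0] ∪ KVorbit g1 g2 g3 ![0, 1, 0]) ⊆
            tubNbhd ε
              (convexHull ℝ {![1, 0, 0], ![0, 1, 0], ![0, -1, 0]}) := by
  intro ε hε
  set K : ℝ := |(n : ℝ)| + 3 with hK
  set B : ℝ := 1 + 30 * (K + 2) ^ 3 / ε with hB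
  have hK0 : 0 < K := by positivity
  have hB1 : 1 ≤ B := by
    have : 0 ≤ 30 * (K + 2) ^ 3 / ε := by positivity
    linarith
  refine ⟨|(m : ℝ)| + ((n : ℝ) ^ 2 + 1 + B ^ 2 + 3 * K ^ 2), by positivity, ?_⟩
  intro t ht g1 g2 g3 hg
  obtain ⟨r, a, b, hb, hN, hM, hP, horb⟩ := exists_eigenvalues_of_isEigenbasis hg
  obtain ⟨ha, har, hBb⟩ := eigenvalue_bounds (B := B) hN hM hP (by linarith)
    (by linarith [le_abs_self (m : ℝ)])
  have hb1 : 1 ≤ |b| := hB1.trans hBb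
  have hδ : 10 * (K + 2) ^ 3 / |b| < ε / 2 := by
    rw [div_lt_iff₀ (by linarith)]
    have h1 : ε * B = ε + 30 * (K + 2) ^ 3 := by
      rw [hB]
      field_simp
    have h2 : ε * B ≤ ε * |b| := by gcongr
    have h3 : 0 < (K + 2) ^ 3 := by positivity
    linarith
  have hclose : ∀ p q : Fin 3 → ℝ, |p 0 - q 0| ≤ 10 * (K + 2) ^ 3 / |b| →
      |p 1 - q 1| ≤ 10 * (K + 2) ^ 3 / |b| → |p 2 - q 2| ≤ 10 * (K + 2) ^ 3 / |b| →
      dist p q < ε / 2 := by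
    intro p q h0 h1 h2
    rw [dist_pi_lt_iff (by positivity)]
    intro i
    rw [Real.dist_eq]
    fin_cases i
    exacts [h0.trans_lt hδ, h1.trans_lt hδ, h2.trans_lt hδ]
  refine (convexHull_min ?_ ((convex_convexHull ℝ _).thickening (ε / 2))).trans
    (thickening_subset_tubNbhd hε _)
  rintro p (hp | hp) <;> rw [Metric.mem_thickening_iff] <;> obtain ⟨θ, h1, h2, h3⟩ := horb _ p hp
  · refine ⟨![1, 0, 0], subset_convexHull ℝ _ (by simp), ?_⟩
    obtain ⟨k0, k1, k2⟩ := orbit_e1_bound hb1 hP ha har (Real.abs_sin_le_one θ)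
      (Real.abs_cos_le_one θ) (by simpa using h1) (by simpa using h2) (by simpa using h3)
    exact hclose _ _ (by simpa using k0) (by simpa using k1) (by simpa using k2)
  · refine ⟨![0, Real.cos θ, 0], ?_, ?_⟩
    · have hseg : ![0, Real.cos θ, 0] ∈ segment ℝ ![(0 : ℝ), 1, 0] ![0, -1, 0] := by
        refine ⟨(1 + Real.cos θ) / 2, (1 - Real.cos θ) / 2, by linarith [Real.neg_one_le_cos θ],
          by linarith [Real.cos_le_one θ], by ring, ?_⟩
        ext i
        fin_cases i
        · simp
        · simp
          ring
        · simp
      exact segment_subset_convexHull (by simp) (by simp) hseg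
    obtain ⟨k0, k1, k2⟩ := orbit_e2_bound hb1 hP ha har (Real.abs_sin_le_one θ)
      (Real.abs_cos_le_one θ) (by simpa using h1) (by simpa using h2) (by simpa using h3)
    exact hclose _ _ (by simpa using k0) (by simpa using k1) (by simpa using k2)
end

section
/- Let m, n be integers with m + n odd, and let M = [[0,1,n+1],[1,0,m],[0,2,2n+1]] (a perfect Hessenberg matrix in SL(3,ℤ) of Hessenberg type ⟨0,1|1,0,2⟩ and Hessenberg complexity 2). Then M is ς-reduced; equivalently, every perfect Hessenberg matrix integer conjugate to M has Hessenberg complexity at least 2. -/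
/-- For `m + n` odd, the square of the matrix is the identity modulo 2. -/
theorem exists_sq_eq_one_add_two_smul (m n : ℤ) (hodd : Odd (m + n)) :
    ∃ N : M3, (!![0, 1, n + 1; 1, 0, m; 0, 2, 2 * n + 1] : M3) ^ 2 = 1 + (2 : ℤ) • N := by
  obtain ⟨k, hk⟩ := hodd
  obtain rfl : m = 2 * k + 1 - n := by linarith
  refine ⟨!![0, n + 1, k + 1 + n ^ 2 + n;
    0, 2 * k + 1 - n, k + 1 + (2 * k + 1 - n) * n;
    1, 2 * n + 1, 2 * k + 1 - n + 2 * n ^ 2 + 2 * n], ?_⟩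
  ext i j
  fin_cases i <;> fin_cases j <;>
    simp [pow_two, Matrix.mul_apply, Fin.sum_univ_three] <;> ring

/-- Being an involution modulo 2 is invariant under integer conjugation. -/
theorem IntegerConjugate.exists_sq_eq_one_add_two_smul {A B : M3} (h : IntegerConjugate A B)
    (hA : ∃ N : M3, A ^ 2 = 1 + (2 : ℤ) • N) : ∃ N : M3, B ^ 2 = 1 + (2 : ℤ) • N := by
  obtain ⟨X, hX, rfl⟩ := h
  obtain ⟨N, hN⟩ := hA
  have hu : IsUnit X.det := Int.isUnit_iff.mpr hX
  refine ⟨X * N * X⁻¹, ?_⟩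
  calc (X * A * X⁻¹) ^ 2 = X * A * (X⁻¹ * X) * A * X⁻¹ := by
        simp only [pow_two, Matrix.mul_assoc]
    _ = X * A ^ 2 * X⁻¹ := by
        rw [Matrix.nonsing_inv_mul X hu, Matrix.mul_one, pow_two, Matrix.mul_assoc X A A]
    _ = 1 + (2 : ℤ) • (X * N * X⁻¹) := by
        rw [hN, Matrix.mul_add, Matrix.add_mul, Matrix.mul_one, Matrix.mul_nonsing_inv X hu,
          Matrix.mul_smul, Matrix.smul_mul]

/-- A perfect Hessenberg matrix whose square is the identity modulo 2 has complexity
at least 2. -/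
theorem IsPerfectHessenberg.two_le_hessComplexity {A : M3} (h : IsPerfectHessenberg A)
    (hA : ∃ N : M3, A ^ 2 = 1 + (2 : ℤ) • N) : 2 ≤ HessComplexity A := by
  obtain ⟨h20, h00, h10, h01, h21, -, -⟩ := h
  obtain ⟨N, hN⟩ := hA
  have hentry : A 2 1 * A 1 0 = 2 * N 2 0 := by
    have h := congrFun (congrFun hN 2) 0
    rw [Matrix.add_apply, Matrix.smul_apply] at h
    simpa [pow_two, Matrix.mul_apply, Fin.sum_univ_three, h20] using h
  have hpos : 0 < A 2 1 * A 1 0 := mul_pos (by linarith) (by linarith)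
  have htwo : 2 ≤ A 2 1 * A 1 0 := by omega
  have hone : 1 ≤ A 1 0 := by linarith
  unfold HessComplexity
  nlinarith

/-- For m + n odd, the perfect Hessenberg matrix [[0,1,n+1],[1,0,m],[0,2,2n+1]]
of Hessenberg type ⟨0,1|1,0,2⟩ is ς-reduced. -/
theorem sigma_reduced_of_odd_sum (m n : ℤ) (hodd : Odd (m + n)) :
    SigmaReduced (!![0, 1, n + 1; 1, 0, m; 0, 2, 2 * n + 1] : M3) := by
  refine ⟨?_, ?_, fun M' _ hM' hconj => ?_⟩
  · rw [Matrix.det_fin_three]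
    simp
    ring
  · simp [IsPerfectHessenberg]
  · have h := hM'.two_le_hessComplexity
      (hconj.exists_sq_eq_one_add_two_smul (exists_sq_eq_one_add_two_smul m n hodd))
    simpa [HessComplexity] using h
end
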